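/- arXiv:2106.15079 — 7 statements merged into one kernel-verified Lean document; each statement's English description precedes it below -/
import Mathlib

section
/- Fix an integer n ≥ 1 and s ∈ ℤ, and assume E_n^{(s)} ≠ 0, D_n^{(s−n+2)} ≠ 0, and D_n^{(s−n−1)} ≠ 0. Then the following identities of polynomials in z hold: E_n^{(s)}·S_n*(z;s) = (−1)ⁿ·D_n^{(s−n+2)}·P_n(z;s−n+2), and E_n^{(s)}·R_n(z;s) = (−1)ⁿ·D_n^{(s−n−1)}·Q_n*(z;s−n−1). -/
/-!
Clearing denominators, both identities compare a determinant whose last column is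
`z^(n-j)` with one whose last row is `z^k`. Transposing the former, reversing all `n + 1`
columns, and reversing the first `n` rows while keeping the last row in place turns it into
the latter: the exponent `s + j - 2k` with `j = n - b`, `k = n - 1 - a` is `(s - n + 2) + 2a - b`,
and `r + 2j - k` with `r = s - n - 1`, `j = n - b`, `k = n - 1 - a` is `s + a - 2b`.
The two reversals have lengths `n + 1` and `n`, so together they contribute the sign
`(-1)^(n(n+1)/2 + n(n-1)/2) = (-1)^n` (`det_transpose_reverse`).
-/

/-- The `2j-k` determinant `D_n^{(r)} := det_{0≤j,k≤n-1} (w (r+2j-k))`, with `D_0^{(r)} = 1`. -/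
noncomputable def Ddet (w : ℤ → ℂ) (n : ℕ) (r : ℤ) : ℂ :=
  Matrix.det (fun j k : Fin n => w (r + 2 * ((j : ℕ) : ℤ) - ((k : ℕ) : ℤ)))

/-- The `j-2k` determinant `E_n^{(s)} := det_{0≤j,k≤n-1} (w (s+j-2k))`, with `E_0^{(s)} = 1`. -/
noncomputable def Edet (w : ℤ → ℂ) (n : ℕ) (s : ℤ) : ℂ :=
  Matrix.det (fun j k : Fin n => w (s + ((j : ℕ) : ℤ) - 2 * ((k : ℕ) : ℤ)))

/-- The monic `2j-k` bi-orthogonal polynomial of the first kind, `P_n(z;r)`. -/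
noncomputable def Ppoly (w : ℤ → ℂ) (n : ℕ) (r : ℤ) (z : ℂ) : ℂ :=
  Matrix.det (fun j k : Fin (n + 1) =>
    if (j : ℕ) < n then w (r + 2 * ((j : ℕ) : ℤ) - ((k : ℕ) : ℤ)) else z ^ (k : ℕ)) /
    Ddet w n r

/-- The reciprocal polynomial `Q*_n(z;r) = zⁿ·Q_n(1/z;r)` of the monic `2j-k`
bi-orthogonal polynomial of the second kind: the last column `z^j` of the
determinant defining `Q_n` is replaced by `z^(n-j)`. -/
noncomputable def Qstar (w : ℤ → ℂ) (n : ℕ) (r : ℤ) (z : ℂ) : ℂ :=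
  Matrix.det (fun j k : Fin (n + 1) =>
    if (k : ℕ) < n then w (r + 2 * ((j : ℕ) : ℤ) - ((k : ℕ) : ℤ)) else z ^ (n - (j : ℕ))) /
    Ddet w n r

/-- The monic `j-2k` bi-orthogonal polynomial of the first kind, `R_n(z;s)`. -/
noncomputable def Rpoly (w : ℤ → ℂ) (n : ℕ) (s : ℤ) (z : ℂ) : ℂ :=
  Matrix.det (fun j k : Fin (n + 1) =>
    if (j : ℕ) < n then w (s + ((j : ℕ) : ℤ) - 2 * ((k : ℕ) : ℤ)) else z ^ (k : ℕ)) /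
    Edet w n s

/-- The reciprocal polynomial `S*_n(z;s) = zⁿ·S_n(1/z;s)` of the monic `j-2k`
bi-orthogonal polynomial of the second kind. -/
noncomputable def Sstar (w : ℤ → ℂ) (n : ℕ) (s : ℤ) (z : ℂ) : ℂ :=
  Matrix.det (fun j k : Fin (n + 1) =>
    if (k : ℕ) < n then w (s + ((j : ℕ) : ℤ) - 2 * ((k : ℕ) : ℤ)) else z ^ (n - (j : ℕ))) /
    Edet w n s

/-- The permutation `a ↦ n - 1 - a` of the first `n` indices that fixes the last index `n`,
written as the cyclic shift `a ↦ a + 1` followed by the full reversal, so that its sign is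
`(-1)^n` times that of the full reversal. -/
def revInit (n : ℕ) : Equiv.Perm (Fin (n + 1)) := Fin.revPerm * finRotate (n + 1)

lemma revInit_of_lt {n : ℕ} (a : Fin (n + 1)) (h : (a : ℕ) < n) :
    (revInit n a : ℕ) = n - 1 - a := by
  have h1 : ((finRotate (n + 1) a : Fin (n + 1)) : ℕ) = a + 1 :=
    coe_finRotate_of_ne_last (by rintro rfl; simp at h)
  simp only [revInit, Equiv.Perm.mul_apply, Fin.revPerm_apply, Fin.val_rev, h1]
  omega

lemma revInit_of_not_lt {n : ℕ} (a : Fin (n + 1)) (h : ¬ (a : ℕ) < n) :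
    (revInit n a : ℕ) = n := by
  obtain rfl : a = Fin.last n := Fin.ext (by simp; omega)
  simp [revInit, Equiv.Perm.mul_apply]

/-- If `B` arises from `A` by transposing, reversing the first `n` rows and reversing all
columns, then `det A = (-1)^n det B`. -/
lemma det_transpose_reverse {n : ℕ} (A B : Matrix (Fin (n + 1)) (Fin (n + 1)) ℂ)
    (h : ∀ a b, B a b = A (Fin.rev b) (revInit n a)) :
    A.det = (-1) ^ n * B.det := by
  have hB : B = (A.transpose.submatrix (revInit n) id).submatrix id Fin.revPerm := by
    ext a b
    exact h a b
  have hs : (((Equiv.Perm.sign (Fin.revPerm : Equiv.Perm (Fin (n + 1))) : ℤ) : ℂ)) *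
      ((Equiv.Perm.sign (Fin.revPerm : Equiv.Perm (Fin (n + 1))) : ℤ) : ℂ) = 1 := by
    rw [← Int.cast_mul, ← Units.val_mul, Int.units_mul_self]
    simp
  have hp : ((-1 : ℂ) ^ n) * (-1) ^ n = 1 := by rw [← mul_pow]; simp
  rw [hB, Matrix.det_permute', Matrix.det_permute, Matrix.det_transpose, revInit,
    Equiv.Perm.sign_mul, sign_finRotate]
  push_cast
  linear_combination (-A.det) * hp - A.det * ((-1 : ℂ) ^ n * (-1) ^ n) * hs

lemma eq_mul_of_sign_mul_eq {n : ℕ} {x y : ℂ} (h : y = (-1) ^ n * x) :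
    x = (-1) ^ n * y := by
  rw [h, ← mul_assoc, ← mul_pow]
  simp

theorem stmt3 (w : ℤ → ℂ) (n : ℕ) (hn : 1 ≤ n) (s : ℤ)
    (hE : Edet w n s ≠ 0)
    (hD1 : Ddet w n (s - (n : ℤ) + 2) ≠ 0)
    (hD2 : Ddet w n (s - (n : ℤ) - 1) ≠ 0) :
    ∀ z : ℂ,
      Edet w n s * Sstar w n s z =
        (-1) ^ n * Ddet w n (s - (n : ℤ) + 2) * Ppoly w n (s - (n : ℤ) + 2) z ∧
      Edet w n s * Rpoly w n s z =
        (-1) ^ n * Ddet w n (s - (n : ℤ) - 1) * Qstar w n (s - (n : ℤ) - 1) z := by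
  intro z
  rw [Sstar, Ppoly, Rpoly, Qstar, mul_div_cancel₀ _ hE, mul_assoc, mul_div_cancel₀ _ hD1,
    mul_div_cancel₀ _ hE, mul_assoc, mul_div_cancel₀ _ hD2]
  constructor
  · apply det_transpose_reverse
    intro a b
    have hb := b.is_lt
    by_cases ha : (a : ℕ) < n
    · have h1 := revInit_of_lt a ha
      rw [if_pos ha, if_pos (by omega), Fin.val_rev, h1]
      congr 1
      omega
    · rw [if_neg ha, if_neg (by rw [revInit_of_not_lt a ha]; omega), Fin.val_rev]
      congr 1
      omega
  -- The reversal turns `Q*` into `R`, so the resulting relation is solved for `det R`.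
  · refine eq_mul_of_sign_mul_eq (det_transpose_reverse _ _ ?_)
    intro a b
    have hb := b.is_lt
    by_cases ha : (a : ℕ) < n
    · have h1 := revInit_of_lt a ha
      rw [if_pos ha, if_pos (by omega), Fin.val_rev, h1]
      congr 1
      omega
    · rw [if_neg ha, if_neg (by rw [revInit_of_not_lt a ha]; omega), Fin.val_rev]
      congr 1
      omega
end

section
/- Under the genericity assumption, for every integer n ≥ 0, every r ∈ ℤ, and every z ∈ ℂ the following four first-order (mixed degree/offset) recurrences hold: P_{n+1}(z;r) = z·P_n(z;r−1) + δ_n^{(r)}·P_n(z;r); P_{n+1}(z;r) = z·P_n(z;r+1) − η_n^{(r)}·P_n(z;r+2); Q*_{n+1}(z;r) = Q*_n(z;r+2) + β_n^{(r)}·z·Q*_n(z;r); and Q*_{n+1}(z;r) = Q*_n(z;r+1) − α_n^{(r)}·z·Q*_n(z;r−1). -/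
/-- The monic `2j-k` bi-orthogonal polynomial of the second kind, `Q_n(z;r)`. -/
noncomputable def Qpoly (w : ℤ → ℂ) (n : ℕ) (r : ℤ) (z : ℂ) : ℂ :=
  Matrix.det (fun j k : Fin (n + 1) =>
    if (k : ℕ) < n then w (r + 2 * ((j : ℕ) : ℤ) - ((k : ℕ) : ℤ)) else z ^ (j : ℕ)) /
    Ddet w n r

/-- The norm `h_n^{(r)} = D_{n+1}^{(r)}/D_n^{(r)}`. -/
noncomputable def hnorm (w : ℤ → ℂ) (n : ℕ) (r : ℤ) : ℂ := Ddet w (n + 1) r / Ddet w n r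

/-- The recurrence coefficient `δ_n^{(r)} = -h_n^{(r-1)}/h_n^{(r)}`. -/
noncomputable def δc (w : ℤ → ℂ) (n : ℕ) (r : ℤ) : ℂ := -hnorm w n (r - 1) / hnorm w n r

/-- The recurrence coefficient `η_n^{(r)} = D_n^{(r+2)}D_{n+1}^{(r-1)}/(D_{n+1}^{(r)}D_n^{(r+1)})`. -/
noncomputable def ηc (w : ℤ → ℂ) (n : ℕ) (r : ℤ) : ℂ :=
  Ddet w n (r + 2) * Ddet w (n + 1) (r - 1) / (Ddet w (n + 1) r * Ddet w n (r + 1))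

/-- The recurrence coefficient `β_n^{(r)} = -h_n^{(r+2)}/h_n^{(r)}`. -/
noncomputable def βc (w : ℤ → ℂ) (n : ℕ) (r : ℤ) : ℂ := -hnorm w n (r + 2) / hnorm w n r

/-- The recurrence coefficient `α_n^{(r)} = D_n^{(r-1)}D_{n+1}^{(r+2)}/(D_{n+1}^{(r)}D_n^{(r+1)})`. -/
noncomputable def αc (w : ℤ → ℂ) (n : ℕ) (r : ℤ) : ℂ :=
  Ddet w n (r - 1) * Ddet w (n + 1) (r + 2) / (Ddet w (n + 1) r * Ddet w n (r + 1))

/-- The leading principal minor of order `n` of the infinite array `f`. -/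
noncomputable def minor (f : ℕ → ℕ → ℂ) (n : ℕ) : ℂ :=
  Matrix.det (Matrix.of fun j k : Fin n => f j k)

/-- The determinant with rows `f 0, …, f (n-1), v`, truncated to columns `0, …, n`. -/
noncomputable def bordered (f : ℕ → ℕ → ℂ) (n : ℕ) (v : ℕ → ℂ) : ℂ :=
  Matrix.det (Matrix.of fun j k : Fin (n + 1) => if (j : ℕ) < n then f j k else v k)

/-- The monic orthogonal functional of the array `f`: the bordered determinant divided by the
leading minor. Taking `v k = z ^ k` gives the monic orthogonal polynomial. -/
noncomputable def pval (f : ℕ → ℕ → ℂ) (n : ℕ) (v : ℕ → ℂ) : ℂ := bordered f n v / minor f n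

lemma pval_linear (f : ℕ → ℕ → ℂ) (n : ℕ) (h : minor f n ≠ 0) :
    ∃ c : ℕ → ℂ, ∀ v, pval f n v = ∑ k ∈ Finset.range n, c k * v k + v n := by
  -- The coefficients are the cofactors of the last row, normalised by the minor.
  refine ⟨fun k => (-1) ^ (n + k) *
    Matrix.det (Matrix.of fun i j : Fin n => f i (if (j : ℕ) < k then j else j + 1)) / minor f n, ?_⟩
  intro v
  unfold pval bordered
  rw [Matrix.det_succ_row _ (Fin.last n), Fin.sum_univ_castSucc, add_div,
    Finset.sum_div, Finset.sum_range]
  congr 1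
  · refine Finset.sum_congr rfl fun k _ => ?_
    have : (Matrix.submatrix (Matrix.of fun j k : Fin (n + 1) => if (j : ℕ) < n then f j k else v k)
        (Fin.last n).succAbove k.castSucc.succAbove) =
        (Matrix.of fun i j : Fin n => f i (if (j : ℕ) < k then j else j + 1)) := by
      ext i j
      simp only [Matrix.submatrix_apply, Matrix.of_apply, Fin.succAbove_last, Fin.val_castSucc, Fin.is_lt, if_true,
        Fin.succAbove, Fin.lt_def]
      split_ifs <;> simp
    rw [this]
    simp
    ring
  · have : (Matrix.submatrix (Matrix.of fun j k : Fin (n + 1) => if (j : ℕ) < n then f j k else v k)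
        (Fin.last n).succAbove (Fin.last n).succAbove) = (Matrix.of fun i j : Fin n => f i j) := by
      ext i j
      simp
    rw [this]
    change _ * minor f n / minor f n = _
    rw [mul_div_assoc, div_self h]
    simp [← two_mul]

lemma pval_congr (f : ℕ → ℕ → ℂ) (n : ℕ) {v u : ℕ → ℂ} (h : ∀ k ≤ n, v k = u k) :
    pval f n v = pval f n u := by
  unfold pval bordered
  congr 2
  ext j k
  simp only [Matrix.of_apply]
  rw [h k (by omega)]

lemma pval_smul (f : ℕ → ℕ → ℂ) (n : ℕ) (h : minor f n ≠ 0) (z : ℂ) (v : ℕ → ℂ) :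
    pval f n (fun k => z * v k) = z * pval f n v := by
  obtain ⟨c, hc⟩ := pval_linear f n h
  simp only [hc, mul_add, Finset.mul_sum]
  congr 1
  exact Finset.sum_congr rfl fun k _ => by ring

/-- Orthogonality. -/
lemma pval_row (f : ℕ → ℕ → ℂ) (n j : ℕ) (hj : j < n) : pval f n (f j) = 0 := by
  unfold pval bordered
  rw [div_eq_zero_iff]
  left
  refine Matrix.det_zero_of_row_eq (i := ⟨j, by omega⟩) (j := Fin.last n) ?_ ?_
  · simp [Fin.ext_iff]
    omega
  · ext k
    simp [hj]

lemma pval_last (f : ℕ → ℕ → ℂ) (n : ℕ) : pval f n (f n) = minor f (n + 1) / minor f n := by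
  unfold pval bordered
  congr 1
  unfold minor
  congr 1
  ext j k
  simp only [Matrix.of_apply]
  split_ifs with h
  · rfl
  · rw [show (j : ℕ) = n by omega]

/-- Evaluation at the row preceding the array; the sign is that of the cyclic permutation moving
this row from the bottom to the top. -/
lemma pval_first (g : ℕ → ℕ → ℂ) (n : ℕ) :
    pval (fun j => g (j + 1)) n (g 0) =
      (-1) ^ n * minor g (n + 1) / minor (fun j => g (j + 1)) n := by
  unfold pval bordered
  congr 1
  have := Matrix.det_permute (finRotate (n + 1)) (Matrix.of fun j k : Fin (n + 1) => g j k)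
  rw [sign_finRotate] at this
  push_cast at this
  unfold minor
  rw [← this]
  congr 1
  ext j k
  simp only [Matrix.submatrix_apply, Matrix.of_apply, id]
  split_ifs with h
  · rw [coe_finRotate_of_ne_last]
    simp [Fin.ext_iff]
    omega
  · rw [show j = Fin.last n from Fin.ext (by simp; omega), finRotate_last]
    rfl

lemma functional_eq_zero (f : ℕ → ℕ → ℂ) (n : ℕ) (h : minor f n ≠ 0) (d : ℕ → ℂ)
    (hd : ∀ j < n, ∑ k ∈ Finset.range n, d k * f j k = 0) (v : ℕ → ℂ) :
    ∑ k ∈ Finset.range n, d k * v k = 0 := by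
  have := Matrix.eq_zero_of_mulVec_eq_zero (M := Matrix.of fun j k : Fin n => f j k)
    (v := fun k : Fin n => d k) h (by
      ext j
      have := hd j j.2
      rw [Finset.sum_range] at this
      simpa [Matrix.mulVec, dotProduct, mul_comm] using this)
  rw [Finset.sum_range]
  exact Finset.sum_eq_zero fun k _ => by rw [show d k = 0 from congrFun this k, zero_mul]

/-- To prove a recurrence it suffices that its right-hand side vanishes at the rows `f 0, …, f n`:
these annihilate the left-hand side, and the coefficients of `v (n+1)` agree. -/
lemma pval_succ_aux (f f' f'' : ℕ → ℕ → ℂ) (n : ℕ) (t : ℂ) (h : minor f (n + 1) ≠ 0)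
    (h' : minor f' n ≠ 0) (h'' : minor f'' n ≠ 0)
    (hrow : ∀ j ≤ n, pval f' n (fun k => f j (k + 1)) + t * pval f'' n (f j) = 0) (v : ℕ → ℂ) :
    pval f (n + 1) v = pval f' n (fun k => v (k + 1)) + t * pval f'' n v := by
  obtain ⟨c, hc⟩ := pval_linear f (n + 1) h
  obtain ⟨c', hc'⟩ := pval_linear f' n h'
  obtain ⟨c'', hc''⟩ := pval_linear f'' n h''
  obtain ⟨d, hd⟩ : ∃ d : ℕ → ℂ, ∀ v : ℕ → ℂ,
      pval f (n + 1) v - (pval f' n (fun k => v (k + 1)) + t * pval f'' n v) =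
        ∑ k ∈ Finset.range (n + 1), d k * v k := by
    refine ⟨fun k => c k - (if k = 0 then 0 else c' (k - 1)) - t * (if k = n then 1 else c'' k), ?_⟩
    intro v
    have e1 : ∑ k ∈ Finset.range (n + 1), (if k = 0 then 0 else c' (k - 1)) * v k =
        ∑ k ∈ Finset.range n, c' k * v (k + 1) := by
      simp [Finset.sum_range_succ']
    have e2 : ∑ k ∈ Finset.range (n + 1), (if k = n then 1 else c'' k) * v k =
        ∑ k ∈ Finset.range n, c'' k * v k + v n := by
      rw [Finset.sum_range_succ, if_pos rfl, one_mul]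
      congr 1
      refine Finset.sum_congr rfl fun k hk => ?_
      rw [if_neg (Finset.mem_range.1 hk).ne]
    simp only [sub_mul, Finset.sum_sub_distrib, mul_assoc, ← Finset.mul_sum]
    rw [e1, e2, hc, hc', hc'']
    ring
  rw [← sub_eq_zero, hd]
  refine functional_eq_zero f (n + 1) h d (fun j hj => ?_) v
  rw [← hd, pval_row f _ j hj, hrow j (by omega), sub_zero]

/-- Recurrence obtained by deleting the first column of the array. -/
lemma pval_succ_col (f f' : ℕ → ℕ → ℂ) (n : ℕ) (hf' : ∀ j k, f' j k = f j (k + 1))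
    (h : minor f (n + 1) ≠ 0) (h0 : minor f n ≠ 0) (h' : minor f' n ≠ 0) (v : ℕ → ℂ) :
    pval f (n + 1) v = pval f' n (fun k => v (k + 1)) +
      -(minor f' (n + 1) / minor f' n) / (minor f (n + 1) / minor f n) * pval f n v := by
  refine pval_succ_aux f f' f n _ h h' h0 (fun j hj => ?_) v
  simp only [← hf']
  change pval f' n (f' j) + _ = 0
  rcases hj.lt_or_eq with hj | rfl
  · rw [pval_row _ _ _ hj, pval_row _ _ _ hj, mul_zero, add_zero]
  · rw [pval_last, pval_last]
    field_simp
    ring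

/-- Recurrence obtained by deleting the first row, with and without the first column. -/
lemma pval_succ_diag (f f₁ f₂ f₃ : ℕ → ℕ → ℂ) (n : ℕ) (hf₁ : ∀ j k, f₁ j k = f j (k + 1))
    (hf₂ : ∀ j k, f₂ j k = f (j + 1) (k + 1)) (hf₃ : ∀ j k, f₃ j k = f (j + 1) k)
    (h : minor f (n + 1) ≠ 0) (h₂ : minor f₂ n ≠ 0) (h₃ : minor f₃ n ≠ 0) (v : ℕ → ℂ) :
    pval f (n + 1) v = pval f₂ n (fun k => v (k + 1)) -
      minor f₃ n * minor f₁ (n + 1) / (minor f (n + 1) * minor f₂ n) * pval f₃ n v := by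
  rw [sub_eq_add_neg, ← neg_mul]
  obtain rfl : f₃ = fun j => f (j + 1) := by ext; simp [hf₃]
  obtain rfl : f₂ = fun j => f₁ (j + 1) := by ext; simp [hf₂, hf₁]
  refine pval_succ_aux f _ _ n _ h h₂ h₃ (fun j hj => ?_) v
  simp only [← hf₁]
  change pval _ n (f₁ j) + _ = 0
  rcases j with _ | j
  · rw [pval_first, pval_first]
    field_simp
    ring
  · rw [pval_row (fun j => f₁ (j + 1)) n j (by omega), pval_row (fun j => f (j + 1)) n j (by omega),
      mul_zero, add_zero]

/-- The array `w (r + 2j - k)`. -/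
noncomputable def arr (w : ℤ → ℂ) (r : ℤ) (j k : ℕ) : ℂ := w (r + 2 * (j : ℤ) - (k : ℤ))

/-- The transpose of `arr`. -/
noncomputable def arrT (w : ℤ → ℂ) (r : ℤ) (k j : ℕ) : ℂ := arr w r j k

lemma minor_arr (w : ℤ → ℂ) (n : ℕ) (r : ℤ) : minor (arr w r) n = Ddet w n r := rfl

lemma minor_arrT (w : ℤ → ℂ) (n : ℕ) (r : ℤ) : minor (arrT w r) n = Ddet w n r :=
  Matrix.det_transpose (Matrix.of fun j k : Fin n => arr w r j k)

lemma Ppoly_eq (w : ℤ → ℂ) (n : ℕ) (r : ℤ) (z : ℂ) :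
    Ppoly w n r z = pval (arr w r) n (fun k => z ^ k) := rfl

lemma Qstar_eq (w : ℤ → ℂ) (n : ℕ) (r : ℤ) (z : ℂ) :
    Qstar w n r z = pval (arrT w r) n (fun k => z ^ (n - k)) := by
  unfold Qstar pval bordered
  rw [minor_arrT, ← Matrix.det_transpose]
  rfl

lemma Qstar_mul (w : ℤ → ℂ) (n : ℕ) (r : ℤ) (z : ℂ) (h : Ddet w n r ≠ 0) :
    pval (arrT w r) n (fun k => z ^ (n + 1 - k)) = z * Qstar w n r z := by
  rw [Qstar_eq, ← pval_smul _ _ (by rwa [minor_arrT])]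
  refine pval_congr _ _ fun k hk => ?_
  rw [← pow_succ', Nat.sub_add_comm hk]

lemma Ppoly_mul (w : ℤ → ℂ) (n : ℕ) (r : ℤ) (z : ℂ) (h : Ddet w n r ≠ 0) :
    pval (arr w r) n (fun k => z ^ (k + 1)) = z * Ppoly w n r z := by
  simp only [pow_succ']
  exact pval_smul (arr w r) n h z _

/-- First-order mixed degree/offset recurrences for the `2j-k` polynomials `P` and `Q*`. -/
theorem stmt6 (w : ℤ → ℂ) (hD : ∀ (m : ℕ) (ρ : ℤ), Ddet w m ρ ≠ 0)
    (n : ℕ) (r : ℤ) (z : ℂ) :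
    Ppoly w (n + 1) r z = z * Ppoly w n (r - 1) z + δc w n r * Ppoly w n r z ∧
    Ppoly w (n + 1) r z = z * Ppoly w n (r + 1) z - ηc w n r * Ppoly w n (r + 2) z ∧
    Qstar w (n + 1) r z = Qstar w n (r + 2) z + βc w n r * z * Qstar w n r z ∧
    Qstar w (n + 1) r z = Qstar w n (r + 1) z - αc w n r * z * Qstar w n (r - 1) z := by
  refine ⟨?_, ?_, ?_, ?_⟩
  · have := pval_succ_col (arr w r) (arr w (r - 1)) n
      (fun j k => by unfold arr; congr 1; push_cast; ring) (hD _ _) (hD _ _) (hD _ _)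
      (fun k => z ^ k)
    rw [Ppoly_mul w n _ z (hD _ _)] at this
    exact this
  · have := pval_succ_diag (arr w r) (arr w (r - 1)) (arr w (r + 1)) (arr w (r + 2)) n
      (fun j k => by unfold arr; congr 1; push_cast; ring)
      (fun j k => by unfold arr; congr 1; push_cast; ring)
      (fun j k => by unfold arr; congr 1; push_cast; ring) (hD _ _) (hD _ _) (hD _ _)
      (fun k => z ^ k)
    rw [Ppoly_mul w n _ z (hD _ _)] at this
    exact this
  · have := pval_succ_col (arrT w r) (arrT w (r + 2)) n
      (fun j k => by unfold arrT arr; congr 1; push_cast; ring)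
      (by rw [minor_arrT]; exact hD _ _) (by rw [minor_arrT]; exact hD _ _)
      (by rw [minor_arrT]; exact hD _ _) (fun k => z ^ (n + 1 - k))
    simp only [Nat.add_sub_add_right, Qstar_mul w n _ z (hD _ _), minor_arrT, ← Qstar_eq] at this
    rw [this, βc, hnorm, hnorm]
    ring
  · have := pval_succ_diag (arrT w r) (arrT w (r + 2)) (arrT w (r + 1)) (arrT w (r - 1)) n
      (fun j k => by unfold arrT arr; congr 1; push_cast; ring)
      (fun j k => by unfold arrT arr; congr 1; push_cast; ring)
      (fun j k => by unfold arrT arr; congr 1; push_cast; ring)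
      (by rw [minor_arrT]; exact hD _ _) (by rw [minor_arrT]; exact hD _ _)
      (by rw [minor_arrT]; exact hD _ _) (fun k => z ^ (n + 1 - k))
    simp only [Nat.add_sub_add_right, Qstar_mul w n _ z (hD _ _), minor_arrT, ← Qstar_eq] at this
    rw [this, αc]
    ring
end

section
/- Under the genericity assumption, for every integer n ≥ 0, every r ∈ ℤ, and every z ∈ ℂ the polynomials P satisfy the third-order pure-degree recurrence: P_{n+3}(z;r) − (δ_{n+2}^{(r)} + δ_{n+1}^{(r−1)})·P_{n+2}(z;r) + (δ_{n+1}^{(r−1)}·δ_{n+1}^{(r)} − z²)·P_{n+1}(z;r) + (δ_n^{(r)} + η_n^{(r−2)})·z²·P_n(z;r) = 0. -/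
open Polynomial in
/-- The moment functional `L_s` on `ℂ[X]`, with `L_s[X ^ k] = w (s - k)`. -/
noncomputable def momentL (w : ℤ → ℂ) (s : ℤ) : ℂ[X] →ₗ[ℂ] ℂ :=
  Polynomial.lsum (fun k : ℕ => w (s - k) • LinearMap.id)

/-- The matrix of moments `w (r + 2j - k)` in its first `n` rows and the vector `v` in the last. -/
noncomputable def borderMat (w : ℤ → ℂ) (n : ℕ) (r : ℤ) (v : Fin (n + 1) → ℂ) :
    Matrix (Fin (n + 1)) (Fin (n + 1)) ℂ :=
  fun j k => if (j : ℕ) < n then w (r + 2 * ((j : ℕ) : ℤ) - ((k : ℕ) : ℤ)) else v k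

/-- The cofactor of the entry in column `k` of the last row of `borderMat`. -/
noncomputable def borderCof (w : ℤ → ℂ) (n : ℕ) (r : ℤ) (k : Fin (n + 1)) : ℂ :=
  (-1) ^ (n + (k : ℕ)) *
    Matrix.det (fun j l : Fin n => w (r + 2 * ((j : ℕ) : ℤ) - (((k.succAbove l : Fin (n + 1)) : ℕ) : ℤ)))

open Polynomial in
/-- `P_n(·;r)` as an element of `ℂ[X]`, its coefficients being normalised cofactors. -/
noncomputable def biPoly (w : ℤ → ℂ) (n : ℕ) (r : ℤ) : ℂ[X] :=
  ∑ k : Fin (n + 1), monomial (k : ℕ) (borderCof w n r k / Ddet w n r)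

theorem momentL_monomial (w : ℤ → ℂ) (s : ℤ) (k : ℕ) (a : ℂ) :
    momentL w s (Polynomial.monomial k a) = w (s - k) * a := by
  simp [momentL, Polynomial.lsum_apply, Polynomial.sum_monomial_index]

theorem momentL_X_mul (w : ℤ → ℂ) (s : ℤ) (p : Polynomial ℂ) :
    momentL w s (Polynomial.X * p) = momentL w (s - 1) p := by
  induction p using Polynomial.induction_on' with
  | add p q hp hq => rw [mul_add, map_add, map_add, hp, hq]
  | monomial k a =>
    rw [Polynomial.X_mul_monomial, momentL_monomial, momentL_monomial]
    congr 2
    push_cast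
    ring

theorem momentL_C_mul (w : ℤ → ℂ) (s : ℤ) (c : ℂ) (p : Polynomial ℂ) :
    momentL w s (Polynomial.C c * p) = c * momentL w s p := by
  rw [← Polynomial.smul_eq_C_mul, map_smul, smul_eq_mul]

theorem det_borderMat (w : ℤ → ℂ) (n : ℕ) (r : ℤ) (v : Fin (n + 1) → ℂ) :
    (borderMat w n r v).det = ∑ k, v k * borderCof w n r k := by
  rw [Matrix.det_succ_row _ (Fin.last n)]
  refine Finset.sum_congr rfl fun k _ => ?_
  have h : (borderMat w n r v).submatrix (Fin.last n).succAbove k.succAbove =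
      fun j l : Fin n => w (r + 2 * ((j : ℕ) : ℤ) - (((k.succAbove l : Fin (n + 1)) : ℕ) : ℤ)) := by
    ext j l
    simp [borderMat]
  rw [h]
  simp only [borderMat, borderCof, Fin.val_last, lt_irrefl, if_false]
  ring

theorem borderCof_last (w : ℤ → ℂ) (n : ℕ) (r : ℤ) :
    borderCof w n r (Fin.last n) = Ddet w n r := by
  simp [borderCof, Ddet, ← two_mul, pow_mul]

theorem eval_biPoly (w : ℤ → ℂ) (n : ℕ) (r : ℤ) (z : ℂ) :
    (biPoly w n r).eval z = Ppoly w n r z := by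
  have h := det_borderMat w n r (fun k => z ^ (k : ℕ))
  have h2 : Ppoly w n r z = (borderMat w n r (fun k => z ^ (k : ℕ))).det / Ddet w n r := rfl
  rw [h2, h, biPoly, Polynomial.eval_finsetSum, Finset.sum_div]
  refine Finset.sum_congr rfl fun k _ => ?_
  rw [Polynomial.eval_monomial]
  ring

theorem momentL_biPoly (w : ℤ → ℂ) (n : ℕ) (r s : ℤ) :
    momentL w s (biPoly w n r) =
      (borderMat w n r (fun k => w (s - ((k : ℕ) : ℤ)))).det / Ddet w n r := by
  rw [det_borderMat, biPoly, map_sum, Finset.sum_div]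
  refine Finset.sum_congr rfl fun k _ => ?_
  rw [momentL_monomial]
  ring

theorem momentL_biPoly_eq_zero (w : ℤ → ℂ) (n : ℕ) (r s : ℤ) (j : ℕ) (hj : j < n)
    (hs : s = r + 2 * j) : momentL w s (biPoly w n r) = 0 := by
  rw [momentL_biPoly, Matrix.det_zero_of_row_eq (i := ⟨j, by omega⟩) (j := Fin.last n), zero_div]
  · intro h
    have := congrArg Fin.val h
    simp at this
    omega
  · funext k
    simp [borderMat, hj, hs]

theorem momentL_biPoly_top (w : ℤ → ℂ) (n : ℕ) (r s : ℤ) (hs : s = r + 2 * n) :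
    momentL w s (biPoly w n r) = hnorm w n r := by
  rw [momentL_biPoly, hnorm]
  congr 1
  unfold Ddet
  congr 1
  ext j k
  by_cases hj : (j : ℕ) < n
  · simp [borderMat, hj]
  · have : (j : ℕ) = n := by omega
    simp [borderMat, this, hs]

/-- The value of `L_{r-2}` on `P_n(·;r)`: moving the last row to the top by the cyclic permutation
`finRotate` produces the sign. -/
theorem momentL_biPoly_bot (w : ℤ → ℂ) (n : ℕ) (r s : ℤ) (hs : s = r - 2) :
    momentL w s (biPoly w n r) = (-1) ^ n * Ddet w (n + 1) s / Ddet w n r := by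
  rw [momentL_biPoly]
  congr 1
  have h : borderMat w n r (fun k => w (s - ((k : ℕ) : ℤ))) =
      Matrix.submatrix
        (Matrix.of fun j k : Fin (n + 1) => w (s + 2 * ((j : ℕ) : ℤ) - ((k : ℕ) : ℤ)))
        (finRotate (n + 1)) id := by
    ext j k
    by_cases hj : (j : ℕ) < n
    · have h1 : ((finRotate (n + 1) j : Fin (n + 1)) : ℕ) = j + 1 :=
        coe_finRotate_of_ne_last (fun h => by simp [h] at hj)
      simp only [borderMat, hj, if_true, Matrix.submatrix_apply, Matrix.of_apply, h1, id, hs]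
      congr 1
      push_cast
      ring
    · have h1 : j = Fin.last n := Fin.ext (by simp; omega)
      subst h1
      simp [borderMat]
  rw [h, Matrix.det_permute, sign_finRotate]
  simp only [Units.val_pow_eq_pow_val, Units.val_neg, Units.val_one, Int.cast_pow, Int.cast_neg,
    Int.cast_one]
  rfl

theorem natDegree_biPoly_le (w : ℤ → ℂ) (n : ℕ) (r : ℤ) : (biPoly w n r).natDegree ≤ n := by
  refine Polynomial.natDegree_sum_le_of_forall_le _ _ fun k _ => ?_
  exact (Polynomial.natDegree_monomial_le _).trans (by omega)

theorem coeff_biPoly (w : ℤ → ℂ) (n : ℕ) (r : ℤ) (h : Ddet w n r ≠ 0) :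
    (biPoly w n r).coeff n = 1 := by
  rw [biPoly, Polynomial.finsetSum_coeff, Finset.sum_eq_single (Fin.last n)]
  · simp [borderCof_last, h]
  · intro k _ hk
    refine Polynomial.coeff_monomial_of_ne _ fun h => hk (Fin.ext ?_)
    simp [h]
  · simp

/-- The first `n` functionals separate polynomials of degree less than `n`. -/
theorem eq_zero_of_momentL (w : ℤ → ℂ) (n : ℕ) (r : ℤ) (h : Ddet w n r ≠ 0)
    (q : Polynomial ℂ) (hq : ∀ k, n ≤ k → q.coeff k = 0)
    (h0 : ∀ j : ℕ, j < n → momentL w (r + 2 * j) q = 0) : q = 0 := by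
  have hv := Matrix.eq_zero_of_mulVec_eq_zero (v := fun k : Fin n => q.coeff k) h (by
    funext j
    have := h0 j j.2
    rw [momentL, Polynomial.lsum_apply,
      Polynomial.sum_eq_of_subset (s := Finset.range n) _ (by simp) (by
        intro k hk
        rw [Polynomial.mem_support_iff] at hk
        rw [Finset.mem_range]
        by_contra hkn
        exact hk (hq k (by omega))), Finset.sum_range] at this
    simpa [Matrix.mulVec, dotProduct] using this)
  ext k
  by_cases hk : k < n
  · simpa using congrFun hv ⟨k, hk⟩
  · simpa using hq k (by omega)

/-- `P_n(·;r)` spans the polynomials of degree at most `n` killed by the first `n` functionals. -/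
theorem eq_C_mul_biPoly (w : ℤ → ℂ) (n : ℕ) (r : ℤ) (h : Ddet w n r ≠ 0)
    (q : Polynomial ℂ) (hq : ∀ k, n < k → q.coeff k = 0)
    (h0 : ∀ j : ℕ, j < n → momentL w (r + 2 * j) q = 0) :
    q = Polynomial.C (q.coeff n) * biPoly w n r := by
  rw [← sub_eq_zero]
  refine eq_zero_of_momentL w n r h _ (fun k hk => ?_) (fun j hj => ?_)
  · rw [Polynomial.coeff_sub, Polynomial.coeff_C_mul]
    rcases hk.eq_or_lt with rfl | hk
    · rw [coeff_biPoly w _ r h, mul_one, sub_self]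
    · rw [hq k hk, Polynomial.coeff_eq_zero_of_natDegree_lt
        ((natDegree_biPoly_le w n r).trans_lt hk), mul_zero, sub_zero]
  · rw [map_sub, momentL_C_mul, h0 j hj, momentL_biPoly_eq_zero w n r _ j hj rfl, mul_zero,
      sub_zero]

theorem coeff_biPoly_succ_sub (w : ℤ → ℂ) (hD : ∀ (m : ℕ) (ρ : ℤ), Ddet w m ρ ≠ 0)
    (n : ℕ) (r s : ℤ) (k : ℕ) (hk : n < k) :
    (biPoly w (n + 1) r - Polynomial.X * biPoly w n s).coeff k = 0 := by
  obtain ⟨m, rfl⟩ : ∃ m, k = m + 1 := ⟨k - 1, by omega⟩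
  rw [Polynomial.coeff_sub, Polynomial.coeff_X_mul]
  rcases (show n ≤ m by omega).eq_or_lt with rfl | hm
  · rw [coeff_biPoly w _ r (hD _ _), coeff_biPoly w _ s (hD _ _), sub_self]
  · rw [Polynomial.coeff_eq_zero_of_natDegree_lt
        ((natDegree_biPoly_le w (n + 1) r).trans_lt (by omega)),
      Polynomial.coeff_eq_zero_of_natDegree_lt ((natDegree_biPoly_le w n s).trans_lt hm), sub_zero]

theorem Ppoly_succ_delta (w : ℤ → ℂ) (hD : ∀ (m : ℕ) (ρ : ℤ), Ddet w m ρ ≠ 0)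
    (n : ℕ) (r : ℤ) (z : ℂ) :
    Ppoly w (n + 1) r z = z * Ppoly w n (r - 1) z + δc w n r * Ppoly w n r z := by
  have hq := eq_C_mul_biPoly w n r (hD _ _) (biPoly w (n + 1) r - Polynomial.X * biPoly w n (r - 1))
    (coeff_biPoly_succ_sub w hD n r (r - 1)) (fun j hj => by
      rw [map_sub, momentL_X_mul, momentL_biPoly_eq_zero w (n + 1) r _ j (by omega) rfl,
        momentL_biPoly_eq_zero w n (r - 1) _ j hj (by ring), sub_zero])
  generalize Polynomial.coeff (R := ℂ) _ n = c at hq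
  -- The functional at `r + 2n` kills `P_{n+1}(·;r)` and determines the scalar.
  have hL := congrArg (momentL w (r + 2 * n)) hq
  rw [map_sub, momentL_X_mul, momentL_biPoly_eq_zero w (n + 1) r _ n (by omega) rfl,
    momentL_biPoly_top w n (r - 1) _ (by ring), momentL_C_mul,
    momentL_biPoly_top w n r _ rfl, zero_sub] at hL
  have hh : hnorm w n r ≠ 0 := div_ne_zero (hD _ _) (hD _ _)
  have hc : c = δc w n r := by rw [δc, hL, mul_div_cancel_right₀ _ hh]
  have hE := congrArg (Polynomial.eval z) hq
  simp only [Polynomial.eval_sub, Polynomial.eval_mul, Polynomial.eval_X, Polynomial.eval_C,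
    eval_biPoly, hc] at hE
  linear_combination hE

theorem Ppoly_succ_eta (w : ℤ → ℂ) (hD : ∀ (m : ℕ) (ρ : ℤ), Ddet w m ρ ≠ 0)
    (n : ℕ) (r : ℤ) (z : ℂ) :
    Ppoly w (n + 1) r z = z * Ppoly w n (r + 1) z - ηc w n r * Ppoly w n (r + 2) z := by
  have hq := eq_C_mul_biPoly w n (r + 2) (hD _ _)
    (biPoly w (n + 1) r - Polynomial.X * biPoly w n (r + 1))
    (coeff_biPoly_succ_sub w hD n r (r + 1)) (fun j hj => by
      rw [map_sub, momentL_X_mul,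
        momentL_biPoly_eq_zero w (n + 1) r _ (j + 1) (by omega) (by push_cast; ring),
        momentL_biPoly_eq_zero w n (r + 1) _ j hj (by ring), sub_zero])
  generalize Polynomial.coeff (R := ℂ) _ n = c at hq
  -- The functional at `r`, below the range used so far, kills `P_{n+1}(·;r)` and determines
  -- the scalar.
  have hL := congrArg (momentL w r) hq
  rw [map_sub, momentL_X_mul, momentL_biPoly_eq_zero w (n + 1) r _ 0 (by omega) (by simp),
    momentL_biPoly_bot w n (r + 1) _ (by ring), momentL_C_mul,
    momentL_biPoly_bot w n (r + 2) _ (by ring), zero_sub] at hL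
  have hc : c = -ηc w n r := by
    have h1 := hD n (r + 1)
    have h2 := hD n (r + 2)
    have h3 := hD (n + 1) r
    have h4 : ((-1 : ℂ)) ^ n ≠ 0 := pow_ne_zero _ (by norm_num)
    rw [ηc]
    field_simp at hL ⊢
    linear_combination -hL
  have hE := congrArg (Polynomial.eval z) hq
  simp only [Polynomial.eval_sub, Polynomial.eval_mul, Polynomial.eval_X, Polynomial.eval_C,
    eval_biPoly, hc] at hE
  linear_combination hE

/-- Third-order pure-degree recurrence for the `2j-k` polynomials `P_n(z;r)`. -/
theorem stmt7 (w : ℤ → ℂ) (hD : ∀ (m : ℕ) (ρ : ℤ), Ddet w m ρ ≠ 0)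
    (n : ℕ) (r : ℤ) (z : ℂ) :
    Ppoly w (n + 3) r z - (δc w (n + 2) r + δc w (n + 1) (r - 1)) * Ppoly w (n + 2) r z +
        (δc w (n + 1) (r - 1) * δc w (n + 1) r - z ^ 2) * Ppoly w (n + 1) r z +
        (δc w n r + ηc w n (r - 2)) * z ^ 2 * Ppoly w n r z = 0 := by
  have a3 := Ppoly_succ_delta w hD (n + 2) r z
  have a2 := Ppoly_succ_delta w hD (n + 1) r z
  have a2' := Ppoly_succ_delta w hD (n + 1) (r - 1) z
  have a1 := Ppoly_succ_delta w hD n r z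
  have b1 := Ppoly_succ_eta w hD n (r - 2) z
  rw [show r - 1 - 1 = r - 2 by ring] at a2'
  rw [show r - 2 + 1 = r - 1 by ring, show r - 2 + 2 = r by ring] at b1
  linear_combination a3 + z * a2' - δc w (n + 1) (r - 1) * a2 + z ^ 2 * b1 - z ^ 2 * a1
end

section
/- Under the genericity assumption, for every integer n ≥ 0, every r ∈ ℤ, and every z ∈ ℂ the reciprocal polynomials Q* satisfy the third-order pure-degree recurrence: Q*_{n+3}(z;r) − (1 + β_{n+2}^{(r)}·z)·Q*_{n+2}(z;r) + (β_{n+1}^{(r)} + α_{n+1}^{(r+1)} + β_{n+1}^{(r+1)} + α_{n+1}^{(r+2)})·z·Q*_{n+1}(z;r) − (β_{n+1}^{(r+1)} + α_{n+1}^{(r+2)})·(β_n^{(r)} + α_n^{(r+1)})·z²·Q*_n(z;r) = 0. -/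
/-- Coefficient of `z^j` in `Q_n(z;r)`: the normalised cofactor of the entry in row `j` of the last
column, extended by zero to `j > n`. -/
noncomputable def qc (w : ℤ → ℂ) (n : ℕ) (r : ℤ) (j : ℕ) : ℂ :=
  if j ≤ n then
    (-1) ^ (j + n) * Matrix.det (fun a b : Fin n =>
      w (r + 2 * ((if (a : ℕ) < j then (a : ℕ) else (a : ℕ) + 1 : ℕ) : ℤ) - ((b : ℕ) : ℤ))) /
      Ddet w n r
  else 0

/-- Cofactor expansion along the last column, for an arbitrary last column `v`. -/
lemma det_lastCol (w : ℤ → ℂ) (n : ℕ) (r : ℤ) (v : ℕ → ℂ) :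
    Matrix.det (fun j k : Fin (n + 1) =>
      if (k : ℕ) < n then w (r + 2 * ((j : ℕ) : ℤ) - ((k : ℕ) : ℤ)) else v j) / Ddet w n r =
    ∑ j ∈ Finset.range (n + 1), qc w n r j * v j := by
  refine (congrArg (· / Ddet w n r) (Matrix.det_succ_column _ (Fin.last n))).trans ?_
  rw [Finset.sum_range, Finset.sum_div]
  refine Finset.sum_congr rfl fun i _ => ?_
  have hi : (i : ℕ) ≤ n := Nat.lt_succ_iff.mp i.2
  have hm : (Matrix.submatrix (fun j k : Fin (n + 1) =>
      if (k : ℕ) < n then w (r + 2 * ((j : ℕ) : ℤ) - ((k : ℕ) : ℤ)) else v j)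
      i.succAbove (Fin.last n).succAbove) = (fun a b : Fin n =>
      w (r + 2 * ((if (a : ℕ) < (i : ℕ) then (a : ℕ) else (a : ℕ) + 1 : ℕ) : ℤ)
        - ((b : ℕ) : ℤ))) := by
    ext a b
    have : ((i.succAbove a : Fin (n + 1)) : ℕ) =
        if (a : ℕ) < (i : ℕ) then (a : ℕ) else (a : ℕ) + 1 := by
      simp only [Fin.succAbove, Fin.lt_def, Fin.val_castSucc]
      split_ifs <;> simp
    change (if (((Fin.last n).succAbove b : Fin (n + 1)) : ℕ) < n then
      w (r + 2 * (((i.succAbove a : Fin (n + 1)) : ℕ) : ℤ)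
        - (((Fin.last n).succAbove b : Fin (n + 1)) : ℕ)) else _) = _
    simp only [Fin.succAbove_last, Fin.val_castSucc, b.2, if_true, this]
  rw [hm]
  simp only [qc, hi, if_true, Fin.val_last, lt_irrefl, if_false]
  ring

lemma qc_top (w : ℤ → ℂ) (hD : ∀ (m : ℕ) (ρ : ℤ), Ddet w m ρ ≠ 0) (n : ℕ) (r : ℤ) :
    qc w n r n = 1 := by
  have : (-1 : ℂ) ^ (n + n) = 1 := Even.neg_one_pow ⟨n, rfl⟩
  simp only [qc, le_refl, if_true, this, one_mul, Fin.is_lt]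
  exact div_self (hD n r)

lemma qc_big (w : ℤ → ℂ) (n : ℕ) (r : ℤ) (j : ℕ) (h : n < j) : qc w n r j = 0 := by
  simp [qc, h]

lemma qc_orth (w : ℤ → ℂ) (n : ℕ) (r s : ℤ) (k : ℕ) (hk : k < n) (hs : s = r - k) :
    ∑ j ∈ Finset.range (n + 1), qc w n r j * w (s + 2 * (j : ℤ)) = 0 := by
  rw [← det_lastCol w n r (fun j => w (s + 2 * (j : ℤ)))]
  refine div_eq_zero_iff.mpr (Or.inl ?_)
  refine Matrix.det_zero_of_column_eq (i := (⟨k, by omega⟩ : Fin (n + 1))) (j := Fin.last n) ?_ ?_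
  · intro h
    have := congrArg Fin.val h
    simp at this
    omega
  · intro j
    simp only [hk, if_true, Fin.val_last, lt_irrefl, if_false]
    congr 1
    rw [hs]; ring

lemma qc_norm (w : ℤ → ℂ) (n : ℕ) (r s : ℤ) (hs : s = r - n) :
    ∑ j ∈ Finset.range (n + 1), qc w n r j * w (s + 2 * (j : ℤ)) = hnorm w n r := by
  rw [← det_lastCol w n r (fun j => w (s + 2 * (j : ℤ))), hnorm]
  congr 1
  unfold Ddet
  congr 1
  ext j k
  split_ifs with h
  · rfl
  · have : (k : ℕ) = n := by have := k.2; omega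
    rw [this, hs]
    congr 1
    ring

/-- Uniqueness: nonvanishing of `D_n^{(r)}` forces a vector of length `n` orthogonal to all `n`
columns to vanish. -/
lemma coeff_eq_zero (w : ℤ → ℂ) (hD : ∀ (m : ℕ) (ρ : ℤ), Ddet w m ρ ≠ 0) (n : ℕ) (r : ℤ)
    (p : ℕ → ℂ)
    (h : ∀ k < n, ∑ j ∈ Finset.range n, p j * w (r - (k : ℤ) + 2 * (j : ℤ)) = 0) :
    ∀ j < n, p j = 0 := by
  have hv := Matrix.eq_zero_of_vecMul_eq_zero (hD n r) (v := fun j : Fin n => p j) (by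
    funext k
    have := h k k.2
    rw [Finset.sum_range] at this
    simp only [Matrix.vecMul, dotProduct, Pi.zero_apply]
    rw [← this]
    refine Finset.sum_congr rfl fun j _ => ?_
    congr 2
    ring)
  intro j hj
  exact congrFun hv ⟨j, hj⟩

lemma hnorm_ne (w : ℤ → ℂ) (hD : ∀ (m : ℕ) (ρ : ℤ), Ddet w m ρ ≠ 0) (n : ℕ) (r : ℤ) :
    hnorm w n r ≠ 0 := div_ne_zero (hD _ _) (hD _ _)

/-- Coefficientwise form of
`Q_{n+1}(z;r+1) = Q_{n+1}(z;r) + (h_{n+1}^{(r+1)} / h_n^{(r)}) Q_n(z;r)`. -/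
lemma qc_shift (w : ℤ → ℂ) (hD : ∀ (m : ℕ) (ρ : ℤ), Ddet w m ρ ≠ 0) (n : ℕ) (r : ℤ) (j : ℕ) :
    qc w (n + 1) (r + 1) j =
      qc w (n + 1) r j + hnorm w (n + 1) (r + 1) / hnorm w n r * qc w n r j := by
  rcases lt_trichotomy j (n + 1) with hj | rfl | hj
  · have key := coeff_eq_zero w hD (n + 1) r (fun j => qc w (n + 1) (r + 1) j -
      (qc w (n + 1) r j + hnorm w (n + 1) (r + 1) / hnorm w n r * qc w n r j)) (by
      intro k hk
      have e1 := qc_orth w (n + 1) r (r - k) k hk rfl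
      rw [Finset.sum_range_succ, qc_top w hD] at e1
      -- column `k` at level `r` is column `k + 1` at level `r + 1`
      have e2 : ∑ j ∈ Finset.range (n + 1 + 1),
          qc w (n + 1) (r + 1) j * w (r - (k : ℤ) + 2 * (j : ℤ)) =
          hnorm w (n + 1) (r + 1) / hnorm w n r *
          ∑ j ∈ Finset.range (n + 1), qc w n r j * w (r - (k : ℤ) + 2 * (j : ℤ)) := by
        rcases Nat.lt_succ_iff_lt_or_eq.mp hk with hk' | rfl
        · rw [qc_orth w n r (r - k) k hk' rfl,
            qc_orth w (n + 1) (r + 1) (r - k) (k + 1) (by omega) (by push_cast; ring), mul_zero]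
        · rw [qc_norm w k r (r - k) rfl,
            qc_norm w (k + 1) (r + 1) (r - k) (by push_cast; ring),
            div_mul_cancel₀ _ (hnorm_ne w hD _ _)]
      rw [Finset.sum_range_succ, qc_top w hD, Finset.mul_sum] at e2
      simp only [sub_mul, add_mul, Finset.sum_sub_distrib, Finset.sum_add_distrib, mul_assoc]
      linear_combination e2 - e1) j hj
    exact sub_eq_zero.mp key
  · rw [qc_top w hD, qc_top w hD, qc_big w n r _ (by omega)]; ring
  · rw [qc_big _ _ _ _ hj, qc_big _ _ _ _ hj, qc_big w n r _ (by omega)]; ring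

/-- Coefficientwise form of `Q_{n+1}(z;r) = z Q_n(z;r+2) + β_n^{(r)} Q_n(z;r)`. -/
lemma qc_degree (w : ℤ → ℂ) (hD : ∀ (m : ℕ) (ρ : ℤ), Ddet w m ρ ≠ 0) (n : ℕ) (r : ℤ) (j : ℕ)
    (hj : j ≤ n) :
    qc w (n + 1) r j = (if j = 0 then 0 else qc w n (r + 2) (j - 1)) + βc w n r * qc w n r j := by
  have key := coeff_eq_zero w hD (n + 1) r (fun j => qc w (n + 1) r j -
      ((if j = 0 then 0 else qc w n (r + 2) (j - 1)) + βc w n r * qc w n r j)) (by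
    intro k hk
    have e1 := qc_orth w (n + 1) r (r - k) k hk rfl
    rw [Finset.sum_range_succ, qc_top w hD] at e1
    -- multiplication by `z` raises the level by two
    have e3 : ∑ j ∈ Finset.range (n + 1 + 1),
        (if j = 0 then 0 else qc w n (r + 2) (j - 1)) * w (r - (k : ℤ) + 2 * (j : ℤ)) =
        ∑ j ∈ Finset.range (n + 1), qc w n (r + 2) j * w (r + 2 - (k : ℤ) + 2 * (j : ℤ)) := by
      rw [Finset.sum_range_succ']
      simp only [if_true, zero_mul, add_zero, Nat.succ_ne_zero, if_false, Nat.add_sub_cancel]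
      refine Finset.sum_congr rfl fun i _ => ?_
      congr 2
      push_cast
      ring
    have e2 : ∑ j ∈ Finset.range (n + 1 + 1),
        (if j = 0 then 0 else qc w n (r + 2) (j - 1)) * w (r - (k : ℤ) + 2 * (j : ℤ)) +
        βc w n r *
        ∑ j ∈ Finset.range (n + 1), qc w n r j * w (r - (k : ℤ) + 2 * (j : ℤ)) = 0 := by
      rw [e3]
      rcases Nat.lt_succ_iff_lt_or_eq.mp hk with hk' | rfl
      · rw [qc_orth w n r (r - k) k hk' rfl, qc_orth w n (r + 2) (r + 2 - k) k hk' rfl]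
        ring
      · rw [qc_norm w k r (r - k) rfl, qc_norm w k (r + 2) (r + 2 - k) rfl, βc,
          div_mul_cancel₀ _ (hnorm_ne w hD _ _)]
        ring
    rw [Finset.sum_range_succ, if_neg (by omega), Nat.add_sub_cancel, qc_top w hD,
      Finset.mul_sum] at e2
    simp only [sub_mul, add_mul, Finset.sum_sub_distrib, Finset.sum_add_distrib, mul_assoc]
    linear_combination e1 - e2) j (by omega)
  exact sub_eq_zero.mp key

lemma qc_zero (w : ℤ → ℂ) (hD : ∀ (m : ℕ) (ρ : ℤ), Ddet w m ρ ≠ 0) (n : ℕ) (r : ℤ) :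
    qc w n r 0 = (-1) ^ n * Ddet w n (r + 2) / Ddet w n r := by
  induction n with
  | zero => 
    have h0 : ∀ ρ, Ddet w 0 ρ = 1 := fun ρ => Matrix.det_fin_zero
    rw [qc_top w hD, h0, h0]; simp
  | succ n ih =>
    rw [qc_degree w hD n r 0 (Nat.zero_le _), ih, βc, hnorm, hnorm]
    have := hD n r
    have := hD n (r + 2)
    have := hD (n + 1) r
    have := hD (n + 1) (r + 2)
    simp only [if_true]
    field_simp
    ring

/-- The contiguity coefficient in terms of `β` and `α`: this is the bilinear determinant identity
obtained from `qc_shift` at the constant coefficient. -/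
lemma shift_coeff (w : ℤ → ℂ) (hD : ∀ (m : ℕ) (ρ : ℤ), Ddet w m ρ ≠ 0) (n : ℕ) (r : ℤ) :
    hnorm w (n + 1) (r + 1) / hnorm w n r = -(βc w n r + αc w n (r + 1)) := by
  have h := qc_shift w hD n r 0
  rw [qc_zero w hD, qc_zero w hD, qc_zero w hD] at h
  have i1 : r + 1 + 2 = r + 3 := by ring
  have i2 : r + 1 + 1 = r + 2 := by ring
  have i3 : r + 1 - 1 = r := by ring
  have a1 := hD n r
  have a2 := hD n (r + 2)
  have a3 := hD (n + 1) r
  have a4 := hD (n + 1) (r + 1)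
  have a5 : ((-1 : ℂ)) ^ n ≠ 0 := pow_ne_zero _ (by norm_num)
  have hc : hnorm w (n + 1) (r + 1) / hnorm w n r = -(Ddet w n r / Ddet w n (r + 2)) *
      (Ddet w (n + 1) (r + 1 + 2) / Ddet w (n + 1) (r + 1)
        - Ddet w (n + 1) (r + 2) / Ddet w (n + 1) r) := by
    generalize hnorm w (n + 1) (r + 1) / hnorm w n r = c at *
    rw [pow_succ] at h
    field_simp at h ⊢
    linear_combination -h
  rw [hc, βc, αc, hnorm, hnorm, i1, i2, i3]
  field_simp
  ring

lemma Qstar_eq_s8 (w : ℤ → ℂ) (n : ℕ) (r : ℤ) (z : ℂ) :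
    Qstar w n r z = ∑ j ∈ Finset.range (n + 1), qc w n r j * z ^ (n - j) :=
  det_lastCol w n r (fun j => z ^ (n - j))

lemma mul_Qstar (w : ℤ → ℂ) (n : ℕ) (r : ℤ) (z : ℂ) :
    z * Qstar w n r z = ∑ j ∈ Finset.range (n + 1), qc w n r j * z ^ (n + 1 - j) := by
  rw [Qstar_eq_s8, Finset.mul_sum]
  refine Finset.sum_congr rfl fun j hj => ?_
  rw [Nat.succ_sub (Nat.lt_succ_iff.mp (Finset.mem_range.mp hj)), pow_succ]
  ring

lemma Qstar_shift (w : ℤ → ℂ) (hD : ∀ (m : ℕ) (ρ : ℤ), Ddet w m ρ ≠ 0) (n : ℕ) (r : ℤ) (z : ℂ) :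
    Qstar w (n + 1) (r + 1) z =
      Qstar w (n + 1) r z - (βc w n r + αc w n (r + 1)) * (z * Qstar w n r z) := by
  have hz : z * Qstar w n r z =
      ∑ j ∈ Finset.range (n + 1 + 1), qc w n r j * z ^ (n + 1 - j) := by
    rw [Finset.sum_range_succ, qc_big w n r (n + 1) (by omega), mul_Qstar]; ring
  rw [hz, Qstar_eq_s8, Qstar_eq_s8, Finset.mul_sum, ← Finset.sum_sub_distrib]
  refine Finset.sum_congr rfl fun j _ => ?_
  rw [qc_shift w hD, shift_coeff w hD]
  ring

lemma Qstar_degree (w : ℤ → ℂ) (hD : ∀ (m : ℕ) (ρ : ℤ), Ddet w m ρ ≠ 0) (n : ℕ) (r : ℤ) (z : ℂ) :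
    Qstar w (n + 1) r z = Qstar w n (r + 2) z + βc w n r * (z * Qstar w n r z) := by
  have h2 : Qstar w n (r + 2) z = ∑ j ∈ Finset.range (n + 1 + 1),
      (if j = 0 then 0 else qc w n (r + 2) (j - 1)) * z ^ (n + 1 - j) := by
    rw [Finset.sum_range_succ', Qstar_eq_s8]
    simp
  rw [h2, mul_Qstar, Qstar_eq_s8, Finset.sum_range_succ, qc_top w hD,
    Finset.sum_range_succ (fun j => (if j = 0 then 0 else qc w n (r + 2) (j - 1)) * _),
    if_neg (by omega), Nat.add_sub_cancel, qc_top w hD, Finset.mul_sum, add_right_comm,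
    ← Finset.sum_add_distrib]
  congr 1
  refine Finset.sum_congr rfl fun j hj => ?_
  rw [qc_degree w hD n r j (Nat.lt_succ_iff.mp (Finset.mem_range.mp hj))]
  ring

/-- Third-order pure-degree recurrence for the reciprocal `2j-k` polynomials `Q*_n(z;r)`. -/
theorem stmt8 (w : ℤ → ℂ) (hD : ∀ (m : ℕ) (ρ : ℤ), Ddet w m ρ ≠ 0)
    (n : ℕ) (r : ℤ) (z : ℂ) :
    Qstar w (n + 3) r z - (1 + βc w (n + 2) r * z) * Qstar w (n + 2) r z +
        (βc w (n + 1) r + αc w (n + 1) (r + 1) + βc w (n + 1) (r + 1) + αc w (n + 1) (r + 2)) *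
          z * Qstar w (n + 1) r z -
        (βc w (n + 1) (r + 1) + αc w (n + 1) (r + 2)) * (βc w n r + αc w n (r + 1)) * z ^ 2 *
          Qstar w n r z = 0 := by
  have i2 : r + 1 + 1 = r + 2 := by ring
  have h1 := Qstar_degree w hD (n + 2) r z
  have h2 := Qstar_shift w hD (n + 1) (r + 1) z
  have h3 := Qstar_shift w hD (n + 1) r z
  have h4 := Qstar_shift w hD n r z
  rw [i2, h3, h4] at h2
  linear_combination h1 + h2
end

section
/- Under the genericity assumption, for every integer n ≥ 0, every s ∈ ℤ, and every z ∈ ℂ the polynomials R satisfy the third-order pure-degree recurrence: R_{n+3}(z;s) − (z + κ_{n+2}^{(s)})·R_{n+2}(z;s) + (κ_{n+1}^{(s)} + ρ_{n+1}^{(s−1)} + ρ_{n+2}^{(s)} + κ_{n+2}^{(s)})·z·R_{n+1}(z;s) − (ρ_{n+2}^{(s)} + κ_{n+2}^{(s)})·(κ_n^{(s)} + ρ_n^{(s−1)})·z·R_n(z;s) = 0. -/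
/-- The monic `j-2k` bi-orthogonal polynomial of the second kind, `S_n(z;s)`. -/
noncomputable def Spoly (w : ℤ → ℂ) (n : ℕ) (s : ℤ) (z : ℂ) : ℂ :=
  Matrix.det (fun j k : Fin (n + 1) =>
    if (k : ℕ) < n then w (s + ((j : ℕ) : ℤ) - 2 * ((k : ℕ) : ℤ)) else z ^ (j : ℕ)) /
    Edet w n s

/-- The norm `g_n^{(s)} = E_{n+1}^{(s)}/E_n^{(s)}`. -/
noncomputable def gnorm (w : ℤ → ℂ) (n : ℕ) (s : ℤ) : ℂ := Edet w (n + 1) s / Edet w n s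

/-- The recurrence coefficient `κ_n^{(s)} = -g_n^{(s-2)}/g_n^{(s)}`. -/
noncomputable def κc (w : ℤ → ℂ) (n : ℕ) (s : ℤ) : ℂ := -gnorm w n (s - 2) / gnorm w n s

/-- The recurrence coefficient `ρ_n^{(s)} = E_n^{(s+1)}E_{n+1}^{(s-2)}/(E_{n+1}^{(s)}E_n^{(s-1)})`. -/
noncomputable def ρc (w : ℤ → ℂ) (n : ℕ) (s : ℤ) : ℂ :=
  Edet w n (s + 1) * Edet w (n + 1) (s - 2) / (Edet w (n + 1) s * Edet w n (s - 1))

/-- The recurrence coefficient `γ_n^{(s)} = -g_n^{(s+1)}/g_n^{(s)}`. -/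
noncomputable def γc (w : ℤ → ℂ) (n : ℕ) (s : ℤ) : ℂ := -gnorm w n (s + 1) / gnorm w n s

/-- The recurrence coefficient `θ_n^{(s)} = E_n^{(s-2)}E_{n+1}^{(s+1)}/(E_{n+1}^{(s)}E_n^{(s-1)})`. -/
noncomputable def θc (w : ℤ → ℂ) (n : ℕ) (s : ℤ) : ℂ :=
  Edet w n (s - 2) * Edet w (n + 1) (s + 1) / (Edet w (n + 1) s * Edet w n (s - 1))

namespace JTwoK

open Polynomial

/-- The cofactors along the last row of the determinant defining `R_n(z;s)`, divided by `E_n^{(s)}`: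
the coefficients of `R_n(z;s)`. -/
noncomputable def coef (w : ℤ → ℂ) (n : ℕ) (s : ℤ) (k : Fin (n + 1)) : ℂ :=
  (-1) ^ (n + (k : ℕ)) * Matrix.det (Matrix.of fun i j : Fin n =>
    w (s + ((i : ℕ) : ℤ) - 2 * (((k.succAbove j : Fin (n + 1)) : ℕ) : ℤ))) / Edet w n s

/-- `R_n(z;s)` as a polynomial in `z`. -/
noncomputable def RP (w : ℤ → ℂ) (n : ℕ) (s : ℤ) : ℂ[X] :=
  ∑ k : Fin (n + 1), C (coef w n s k) * X ^ (k : ℕ)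

/-- The linear functional on `ℂ[X]` sending `X ^ k` to `w (a - 2k)`. -/
noncomputable def L (w : ℤ → ℂ) (a : ℤ) : ℂ[X] →ₗ[ℂ] ℂ :=
  Polynomial.lsum (fun k => LinearMap.mulRight ℂ (w (a - 2 * (k : ℤ))))

lemma L_C_mul_X_pow (w : ℤ → ℂ) (a : ℤ) (c : ℂ) (k : ℕ) :
    L w a (C c * X ^ k) = c * w (a - 2 * (k : ℤ)) := by
  rw [C_mul_X_pow_eq_monomial]
  simp [L, Polynomial.lsum_apply, Polynomial.sum_monomial_index]

lemma L_X_mul (w : ℤ → ℂ) (a : ℤ) (P : ℂ[X]) : L w a (X * P) = L w (a - 2) P := by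
  induction P using Polynomial.induction_on' with
  | add p q hp hq => rw [mul_add, map_add, map_add, hp, hq]
  | monomial k c =>
    rw [← C_mul_X_pow_eq_monomial, L_C_mul_X_pow,
      show (X : ℂ[X]) * (C c * X ^ k) = C c * X ^ (k + 1) by ring, L_C_mul_X_pow]
    congr 2
    push_cast
    ring

lemma L_C_mul (w : ℤ → ℂ) (a : ℤ) (c : ℂ) (P : ℂ[X]) : L w a (C c * P) = c * L w a P := by
  rw [← smul_eq_C_mul, map_smul, smul_eq_mul]

lemma Edet_eq (w : ℤ → ℂ) (n : ℕ) (s : ℤ) : Edet w n s =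
    Matrix.det (Matrix.of fun j k : Fin n => w (s + ((j : ℕ) : ℤ) - 2 * ((k : ℕ) : ℤ))) := rfl

lemma Rpoly_eq (w : ℤ → ℂ) (n : ℕ) (s : ℤ) (z : ℂ) : Rpoly w n s z =
    Matrix.det (Matrix.of fun j k : Fin (n + 1) =>
      if (j : ℕ) < n then w (s + ((j : ℕ) : ℤ) - 2 * ((k : ℕ) : ℤ)) else z ^ (k : ℕ)) /
      Edet w n s := rfl

/-- Expansion along the last row, with an arbitrary row `v` in place of the powers of `z`. -/
lemma sum_coef (w : ℤ → ℂ) (n : ℕ) (s : ℤ) (v : ℕ → ℂ) :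
    ∑ k : Fin (n + 1), coef w n s k * v k =
      Matrix.det (Matrix.of fun j k : Fin (n + 1) =>
        if (j : ℕ) < n then w (s + ((j : ℕ) : ℤ) - 2 * ((k : ℕ) : ℤ)) else v k) / Edet w n s := by
  rw [Matrix.det_succ_row _ (Fin.last n), Finset.sum_div]
  refine Finset.sum_congr rfl fun k _ => ?_
  have h : Matrix.submatrix (Matrix.of fun j k : Fin (n + 1) =>
        if (j : ℕ) < n then w (s + ((j : ℕ) : ℤ) - 2 * ((k : ℕ) : ℤ)) else v k)
        (Fin.last n).succAbove k.succAbove = (Matrix.of fun i j : Fin n =>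
        w (s + ((i : ℕ) : ℤ) - 2 * (((k.succAbove j : Fin (n + 1)) : ℕ) : ℤ))) := by
    ext i j
    simp [Matrix.submatrix]
  rw [h]
  simp only [Matrix.of_apply, coef, Fin.val_last, lt_irrefl, if_false]
  ring

lemma eval_RP (w : ℤ → ℂ) (n : ℕ) (s : ℤ) (z : ℂ) : (RP w n s).eval z = Rpoly w n s z := by
  rw [RP, eval_finsetSum, Rpoly_eq, ← sum_coef w n s (fun k => z ^ k)]
  simp

lemma L_RP (w : ℤ → ℂ) (n : ℕ) (s a : ℤ) :
    L w a (RP w n s) = ∑ k : Fin (n + 1), coef w n s k * w (a - 2 * ((k : ℕ) : ℤ)) := by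
  rw [RP, map_sum]
  exact Finset.sum_congr rfl fun k _ => L_C_mul_X_pow w a _ _

/-- The determinant with last row `w (s + j - 2k)`, `j < n`, has two equal rows. -/
lemma L_RP_eq_zero (w : ℤ → ℂ) (n : ℕ) (s a : ℤ) (h₁ : s ≤ a) (h₂ : a < s + n) :
    L w a (RP w n s) = 0 := by
  obtain ⟨j, rfl⟩ : ∃ j : ℕ, a = s + j := ⟨(a - s).toNat, by omega⟩
  have hj : j < n := by omega
  rw [L_RP, sum_coef w n s (fun k => w (s + j - 2 * (k : ℤ))),
    Matrix.det_zero_of_row_eq (i := ⟨j, by omega⟩) (j := Fin.last n), zero_div]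
  · intro h
    have := congrArg Fin.val h
    simp at this
    omega
  · ext k
    simp [hj]

lemma L_RP_last (w : ℤ → ℂ) (n : ℕ) (s : ℤ) : L w (s + n) (RP w n s) = gnorm w n s := by
  rw [L_RP, sum_coef w n s (fun k => w (s + n - 2 * (k : ℤ))), gnorm, Edet_eq]
  congr 2
  ext j k
  simp only [Matrix.of_apply]
  split_ifs with h
  · rfl
  · have : (j : ℕ) = n := by omega
    rw [this]

/-- The minors along the first row of `E_{n+1}^{(s-1)}` are those along the last row of the
determinant of `R_n(z;s)`. -/
lemma L_RP_first (w : ℤ → ℂ) (n : ℕ) (s : ℤ) :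
    L w (s - 1) (RP w n s) = (-1) ^ n * (Edet w (n + 1) (s - 1) / Edet w n s) := by
  rw [L_RP, Edet_eq w (n + 1), Matrix.det_succ_row_zero, Finset.sum_div, Finset.mul_sum]
  refine Finset.sum_congr rfl fun k _ => ?_
  have h : Matrix.submatrix (Matrix.of fun j k : Fin (n + 1) =>
        w (s - 1 + ((j : ℕ) : ℤ) - 2 * ((k : ℕ) : ℤ)))
        Fin.succ k.succAbove = (Matrix.of fun i j : Fin n =>
        w (s + ((i : ℕ) : ℤ) - 2 * (((k.succAbove j : Fin (n + 1)) : ℕ) : ℤ))) := by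
    ext i j
    simp only [Matrix.submatrix, Matrix.of_apply, Fin.val_succ]
    congr 1
    push_cast
    ring
  rw [h, coef, pow_add]
  simp only [Matrix.of_apply, Fin.val_zero, Nat.cast_zero, add_zero]
  ring

lemma coeff_RP_of_lt (w : ℤ → ℂ) (n : ℕ) (s : ℤ) (m : ℕ) (h : n < m) : (RP w n s).coeff m = 0 := by
  rw [RP, finsetSum_coeff]
  refine Finset.sum_eq_zero fun k _ => ?_
  rw [coeff_C_mul_X_pow, if_neg (by omega)]

lemma coeff_RP_self (w : ℤ → ℂ) (hE : ∀ (m : ℕ) (σ : ℤ), Edet w m σ ≠ 0) (n : ℕ) (s : ℤ) :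
    (RP w n s).coeff n = 1 := by
  rw [RP, finsetSum_coeff, Finset.sum_eq_single (Fin.last n)]
  · rw [coeff_C_mul_X_pow, if_pos (by simp), coef]
    simp only [Fin.succAbove_last, Fin.val_castSucc, Fin.val_last, ← two_mul, pow_mul]
    norm_num
    exact div_self (hE n s)
  · intro k _ hk
    rw [coeff_C_mul_X_pow, if_neg]
    intro h
    exact hk (Fin.ext (by simp [← h]))
  · simp

/-- Nonvanishing of `E_n^{(s)}`: a polynomial of degree `< n` killed by `L s, …, L (s+n-1)` is
zero. -/
lemma eq_zero_of_L (w : ℤ → ℂ) (n : ℕ) (s : ℤ) (hE : Edet w n s ≠ 0) (P : ℂ[X])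
    (hP : ∀ m, n ≤ m → P.coeff m = 0)
    (hL : ∀ a, s ≤ a → a < s + n → L w a P = 0) : P = 0 := by
  have hsum : P = ∑ k : Fin n, C (P.coeff k) * X ^ (k : ℕ) := by
    ext m
    rw [finsetSum_coeff]
    simp only [coeff_C_mul_X_pow]
    by_cases hm : m < n
    · rw [Finset.sum_eq_single (⟨m, hm⟩ : Fin n)]
      · simp
      · intro k _ hk
        rw [if_neg]
        rintro rfl
        exact hk rfl
      · simp
    · rw [hP m (by omega)]
      refine (Finset.sum_eq_zero fun k _ => ?_).symm
      rw [if_neg (by omega)]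
  have hv : (fun k : Fin n => P.coeff k) = 0 := by
    refine Matrix.eq_zero_of_mulVec_eq_zero hE ?_
    ext j
    have h := hL (s + (j : ℕ)) (by omega) (by omega)
    rw [hsum, map_sum] at h
    simp only [L_C_mul_X_pow] at h
    simp only [Matrix.mulVec, dotProduct, Pi.zero_apply]
    rw [← h]
    exact Finset.sum_congr rfl fun k _ => mul_comm _ _
  ext m
  by_cases hm : m < n
  · exact congrFun hv ⟨m, hm⟩
  · exact hP m (by omega)

lemma gnorm_ne_zero (w : ℤ → ℂ) (hE : ∀ (m : ℕ) (σ : ℤ), Edet w m σ ≠ 0) (n : ℕ) (s : ℤ) :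
    gnorm w n s ≠ 0 := div_ne_zero (hE _ _) (hE _ _)

/-- The leading terms of `R_{n+1}` and `X R_n` cancel, so `R_{n+1} - X R_n - c R_n` has degree at
most `n`, whatever the three shifts. -/
lemma coeff_comb (w : ℤ → ℂ) (hE : ∀ (m : ℕ) (σ : ℤ), Edet w m σ ≠ 0) (n : ℕ) (s t u : ℤ)
    (c : ℂ) (m : ℕ) (hm : n + 1 ≤ m) :
    (RP w (n + 1) s - X * RP w n t - C c * RP w n u).coeff m = 0 := by
  obtain ⟨m, rfl⟩ : ∃ k, m = k + 1 := ⟨m - 1, by omega⟩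
  rw [coeff_sub, coeff_sub, coeff_C_mul, coeff_X_mul, coeff_RP_of_lt w n u _ (by omega)]
  rcases Nat.eq_or_lt_of_le hm with h | h
  · obtain rfl : n = m := by omega
    rw [coeff_RP_self w hE, coeff_RP_self w hE]
    ring
  · rw [coeff_RP_of_lt w _ s _ h, coeff_RP_of_lt w _ t _ (by omega)]
    ring

lemma RP_succ_kappa (w : ℤ → ℂ) (hE : ∀ (m : ℕ) (σ : ℤ), Edet w m σ ≠ 0) (n : ℕ) (s : ℤ) :
    RP w (n + 1) s = X * RP w n (s - 2) + C (κc w n s) * RP w n s := by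
  have key : RP w (n + 1) s - X * RP w n (s - 2) - C (κc w n s) * RP w n s = 0 := by
    refine eq_zero_of_L w (n + 1) s (hE _ _) _ (coeff_comb w hE n _ _ _ _) fun a h₁ h₂ => ?_
    rw [map_sub, map_sub, L_X_mul, L_C_mul, L_RP_eq_zero w (n + 1) s a h₁ h₂]
    by_cases ha : a < s + n
    · rw [L_RP_eq_zero w n s a h₁ ha, L_RP_eq_zero w n (s - 2) (a - 2) (by omega) (by omega)]
      ring
    · -- `L (s+n)` is the only functional here that does not kill each term separately
      obtain rfl : a = s + n := by push_cast at h₂; omega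
      rw [L_RP_last, show s + n - 2 = s - 2 + (n : ℤ) by ring, L_RP_last, κc,
        div_mul_cancel₀ _ (gnorm_ne_zero w hE n s)]
      ring
  linear_combination key

lemma RP_succ_rho (w : ℤ → ℂ) (hE : ∀ (m : ℕ) (σ : ℤ), Edet w m σ ≠ 0) (n : ℕ) (s : ℤ) :
    RP w (n + 1) s = X * RP w n (s - 1) - C (ρc w n s) * RP w n (s + 1) := by
  have key : RP w (n + 1) s - X * RP w n (s - 1) - C (-ρc w n s) * RP w n (s + 1) = 0 := by
    refine eq_zero_of_L w (n + 1) s (hE _ _) _ (coeff_comb w hE n _ _ _ _) fun a h₁ h₂ => ?_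
    rw [map_sub, map_sub, L_X_mul, L_C_mul, L_RP_eq_zero w (n + 1) s a h₁ h₂]
    push_cast at h₂
    by_cases ha : s < a
    · rw [L_RP_eq_zero w n (s + 1) a (by omega) (by omega),
        L_RP_eq_zero w n (s - 1) (a - 2) (by omega) (by omega)]
      ring
    · -- `L s` is the only functional here that does not kill each term separately
      obtain rfl : a = s := by omega
      have e₁ := L_RP_first w n (a + 1)
      have e₂ := L_RP_first w n (a - 1)
      rw [show a + 1 - 1 = a by ring] at e₁
      rw [show a - 1 - 1 = a - 2 by ring] at e₂
      rw [e₁, e₂, ρc]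
      have h1 := hE (n + 1) a
      have h2 := hE n (a + 1)
      have h3 := hE n (a - 1)
      field_simp
      ring
  rw [C_neg] at key
  linear_combination key

/-- A unit shift of `s` costs a multiple of the polynomial of one degree less. -/
lemma RP_shift (w : ℤ → ℂ) (hE : ∀ (m : ℕ) (σ : ℤ), Edet w m σ ≠ 0) (n : ℕ) (s : ℤ) :
    RP w (n + 1) (s - 1) = RP w (n + 1) s - C (κc w n s + ρc w n (s - 1)) * RP w n s := by
  have h₁ := RP_succ_kappa w hE n s
  have h₂ := RP_succ_rho w hE n (s - 1)
  rw [show s - 1 - 1 = s - 2 by ring, show s - 1 + 1 = s by ring] at h₂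
  rw [C_add]
  linear_combination h₂ - h₁

lemma d_pred_eq (w : ℤ → ℂ) (hE : ∀ (m : ℕ) (σ : ℤ), Edet w m σ ≠ 0) (n : ℕ) (s : ℤ) :
    κc w n (s - 1) + ρc w n (s - 2) = ρc w (n + 1) s + κc w (n + 1) s := by
  have h₁ := RP_succ_kappa w hE (n + 1) s
  have h₂ := RP_succ_rho w hE (n + 1) s
  have h₃ := RP_shift w hE n (s - 1)
  rw [show s - 1 - 1 = s - 2 by ring] at h₃
  have key : X * (C (κc w n (s - 1) + ρc w n (s - 2)) * RP w n (s - 1)) =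
      C (κc w (n + 1) s) * RP w (n + 1) s + C (ρc w (n + 1) s) * RP w (n + 1) (s + 1) := by
    linear_combination h₁ - h₂ + X * h₃
  have hc := congrArg (fun P : ℂ[X] => P.coeff (n + 1)) key
  simp only [coeff_X_mul, coeff_add, coeff_C_mul, coeff_RP_self w hE, mul_one] at hc
  rw [hc, add_comm]

end JTwoK

/-- Third-order pure-degree recurrence for the `j-2k` polynomials `R_n(z;s)`. -/
theorem stmt9 (w : ℤ → ℂ) (hE : ∀ (m : ℕ) (σ : ℤ), Edet w m σ ≠ 0)
    (n : ℕ) (s : ℤ) (z : ℂ) :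
    Rpoly w (n + 3) s z - (z + κc w (n + 2) s) * Rpoly w (n + 2) s z +
        (κc w (n + 1) s + ρc w (n + 1) (s - 1) + ρc w (n + 2) s + κc w (n + 2) s) * z *
          Rpoly w (n + 1) s z -
        (ρc w (n + 2) s + κc w (n + 2) s) * (κc w n s + ρc w n (s - 1)) * z *
          Rpoly w n s z = 0 := by
  have h₀ := JTwoK.RP_succ_kappa w hE (n + 2) s
  have h₁ := JTwoK.RP_shift w hE (n + 1) s
  have h₂ := JTwoK.RP_shift w hE (n + 1) (s - 1)
  have h₃ := JTwoK.RP_shift w hE n s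
  have hd := JTwoK.d_pred_eq w hE (n + 1) s
  rw [show s - 1 - 1 = s - 2 by ring, hd] at h₂
  replace h₀ := congrArg (Polynomial.eval z) h₀
  replace h₁ := congrArg (Polynomial.eval z) h₁
  replace h₂ := congrArg (Polynomial.eval z) h₂
  replace h₃ := congrArg (Polynomial.eval z) h₃
  simp only [Polynomial.eval_add, Polynomial.eval_sub, Polynomial.eval_mul, Polynomial.eval_X,
    Polynomial.eval_C, JTwoK.eval_RP] at h₀ h₁ h₂ h₃
  linear_combination h₀ + z * h₁ + z * h₂ -
    z * (ρc w (n + 2) s + κc w (n + 2) s) * h₃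
end

section
/- Under the genericity assumption, for every integer n ≥ 0, every s ∈ ℤ, and every z ∈ ℂ the reciprocal polynomials S* satisfy the third-order pure-degree recurrence: S*_{n+3}(z;s) − (γ_{n+2}^{(s)} + γ_{n+1}^{(s+1)})·z·S*_{n+2}(z;s) − (1 − γ_{n+1}^{(s+1)}·γ_{n+1}^{(s)}·z²)·S*_{n+1}(z;s) + (θ_{n+1}^{(s+1)} + γ_{n+1}^{(s+1)})·z·S*_n(z;s) = 0. -/
open Polynomial in
/-- The functional `X ^ j ↦ w (m + j)` on polynomials. -/
noncomputable def momentFun (w : ℤ → ℂ) (m : ℤ) (p : ℂ[X]) : ℂ :=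
  p.sum fun j a => a * w (m + j)

open Polynomial in
/-- The reciprocal polynomial of `p`, regarded as a polynomial of formal degree `n`, evaluated
at `z`. -/
noncomputable def recip (n : ℕ) (z : ℂ) (p : ℂ[X]) : ℂ :=
  ∑ j ∈ Finset.range (n + 1), p.coeff j * z ^ (n - j)

/-- The cofactor of the entry `j` of the last column in the determinant defining `S_n(·;s)`. -/
noncomputable def sCof (w : ℤ → ℂ) (n : ℕ) (s : ℤ) (j : Fin (n + 1)) : ℂ :=
  (-1) ^ ((j : ℕ) + n) *
    Matrix.det (fun a b : Fin n => w (s + ((j.succAbove a : ℕ) : ℤ) - 2 * ((b : ℕ) : ℤ)))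

open Polynomial in
/-- `S_n(·;s)` as an element of `ℂ[X]`. -/
noncomputable def sPolynomial (w : ℤ → ℂ) (n : ℕ) (s : ℤ) : ℂ[X] :=
  ∑ j : Fin (n + 1), C (sCof w n s j / Edet w n s) * X ^ (j : ℕ)

namespace BiOrth

open Polynomial

variable {w : ℤ → ℂ}

/-! ### The moment functionals -/

lemma momentFun_eq_sum (m : ℤ) {p : ℂ[X]} {N : ℕ} (h : p.natDegree < N) :
    momentFun w m p = ∑ j ∈ Finset.range N, p.coeff j * w (m + j) :=
  p.sum_over_range' (by simp) N h

lemma momentFun_sub (m : ℤ) (p q : ℂ[X]) :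
    momentFun w m (p - q) = momentFun w m p - momentFun w m q := by
  have h := natDegree_sub_le p q
  rw [momentFun_eq_sum (N := max p.natDegree q.natDegree + 1) m (by omega),
    momentFun_eq_sum (N := max p.natDegree q.natDegree + 1) m (by omega),
    momentFun_eq_sum (N := max p.natDegree q.natDegree + 1) m (by omega),
    ← Finset.sum_sub_distrib]
  simp [sub_mul]

lemma momentFun_C_mul (m : ℤ) (c : ℂ) (p : ℂ[X]) :
    momentFun w m (C c * p) = c * momentFun w m p := by
  have h := natDegree_C_mul_le c p
  rw [momentFun_eq_sum (N := p.natDegree + 1) m (by omega),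
    momentFun_eq_sum (N := p.natDegree + 1) m (by omega), Finset.mul_sum]
  simp [mul_assoc]

lemma momentFun_X_mul (m : ℤ) (p : ℂ[X]) :
    momentFun w m (X * p) = momentFun w (m + 1) p := by
  have h : (X * p).natDegree < p.natDegree + 1 + 1 :=
    lt_of_le_of_lt natDegree_mul_le (by rw [natDegree_X]; omega)
  rw [momentFun_eq_sum m h, momentFun_eq_sum (N := p.natDegree + 1) _ (by omega),
    Finset.sum_range_succ']
  simp only [coeff_X_mul, mul_coeff_zero, coeff_X_zero, zero_mul, add_zero]
  refine Finset.sum_congr rfl fun j _ => ?_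
  congr 2
  push_cast
  ring

/-- A polynomial of degree `< n` killed by the first `n` functionals vanishes. -/
lemma eq_zero_of_momentFun {n : ℕ} {s : ℤ} (hE : Edet w n s ≠ 0) {p : ℂ[X]}
    (hd : ∀ j, n ≤ j → p.coeff j = 0)
    (h : ∀ k : ℕ, k < n → momentFun w (s - 2 * k) p = 0) : p = 0 := by
  rcases Nat.eq_zero_or_pos n with rfl | hn
  · ext j
    simpa using hd j (Nat.zero_le _)
  have hdeg : p.natDegree < n := by
    by_contra! hc
    have h0 : p = 0 := leadingCoeff_eq_zero.1 (hd _ hc)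
    rw [h0, natDegree_zero] at hc
    omega
  have key := Matrix.eq_zero_of_vecMul_eq_zero (v := fun j : Fin n => p.coeff j)
    (M := fun j k : Fin n => w (s + ((j : ℕ) : ℤ) - 2 * ((k : ℕ) : ℤ))) hE (by
      ext k
      have hk := h k k.2
      rw [momentFun_eq_sum _ hdeg, Finset.sum_range] at hk
      rw [Pi.zero_apply, ← hk]
      simp only [Matrix.vecMul, dotProduct]
      refine Finset.sum_congr rfl fun j _ => ?_
      congr 2
      ring)
  ext j
  by_cases hj : j < n
  · exact congrFun key ⟨j, hj⟩
  · exact hd j (not_lt.1 hj)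

/-! ### The determinantal polynomials -/

/-- Expansion along the last column of a determinant of the type defining `S_n(·;s)`. -/
lemma det_lastCol (n : ℕ) (s : ℤ) (u : ℕ → ℂ) :
    Matrix.det (fun j k : Fin (n + 1) =>
      if (k : ℕ) < n then w (s + ((j : ℕ) : ℤ) - 2 * ((k : ℕ) : ℤ)) else u j) =
    ∑ j : Fin (n + 1), sCof w n s j * u j := by
  refine (Matrix.det_succ_column _ (Fin.last n)).trans (Finset.sum_congr rfl fun j _ => ?_)
  have : (Matrix.submatrix (fun j k : Fin (n + 1) =>
      if (k : ℕ) < n then w (s + ((j : ℕ) : ℤ) - 2 * ((k : ℕ) : ℤ)) else u j)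
      j.succAbove (Fin.last n).succAbove) =
      (fun a b : Fin n => w (s + ((j.succAbove a : ℕ) : ℤ) - 2 * ((b : ℕ) : ℤ))) := by
    ext a b
    refine (Matrix.submatrix_apply _ _ _ _ _).trans ?_
    simp
  rw [this, sCof]
  simp only [Fin.val_last, lt_irrefl, if_false]
  ring

lemma coeff_sPolynomial (n : ℕ) (s : ℤ) (j : Fin (n + 1)) :
    (sPolynomial w n s).coeff j = sCof w n s j / Edet w n s := by
  simp [sPolynomial, finsetSum_coeff, coeff_X_pow, Fin.val_inj]

lemma coeff_sPolynomial_of_lt {n : ℕ} (s : ℤ) {j : ℕ} (hj : n < j) :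
    (sPolynomial w n s).coeff j = 0 := by
  simp only [sPolynomial, finsetSum_coeff, coeff_C_mul, coeff_X_pow]
  refine Finset.sum_eq_zero fun i _ => ?_
  rw [if_neg (by omega), mul_zero]

lemma coeff_sPolynomial_self {n : ℕ} {s : ℤ} (hE : Edet w n s ≠ 0) :
    (sPolynomial w n s).coeff n = 1 := by
  have := coeff_sPolynomial (w := w) n s (Fin.last n)
  rw [Fin.val_last] at this
  rw [this, div_eq_one_iff_eq hE, sCof]
  simp [Edet, ← two_mul]

lemma coeff_sPolynomial_zero (n : ℕ) (s : ℤ) :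
    (sPolynomial w n s).coeff 0 = (-1) ^ n * Edet w n (s + 1) / Edet w n s := by
  have := coeff_sPolynomial (w := w) n s 0
  rw [Fin.val_zero] at this
  rw [this, sCof, Edet, Edet]
  simp [add_comm, add_left_comm]

lemma sum_range_sPolynomial (n : ℕ) (s : ℤ) (u : ℕ → ℂ) :
    ∑ j ∈ Finset.range (n + 1), (sPolynomial w n s).coeff j * u j =
      Matrix.det (fun j k : Fin (n + 1) =>
        if (k : ℕ) < n then w (s + ((j : ℕ) : ℤ) - 2 * ((k : ℕ) : ℤ)) else u j) / Edet w n s := by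
  rw [det_lastCol, Finset.sum_range, Finset.sum_div]
  refine Finset.sum_congr rfl fun j _ => ?_
  rw [coeff_sPolynomial]
  ring

lemma momentFun_sPolynomial (n : ℕ) (s m : ℤ) :
    momentFun w m (sPolynomial w n s) =
      Matrix.det (fun j k : Fin (n + 1) =>
        if (k : ℕ) < n then w (s + ((j : ℕ) : ℤ) - 2 * ((k : ℕ) : ℤ)) else w (m + (j : ℕ))) /
        Edet w n s := by
  rw [← sum_range_sPolynomial n s (fun j => w (m + j))]
  refine momentFun_eq_sum m ?_
  rw [Nat.lt_succ_iff, natDegree_le_iff_coeff_eq_zero]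
  exact fun j hj => coeff_sPolynomial_of_lt s hj

/-- Orthogonality: two columns of the determinant coincide. -/
lemma momentFun_sPolynomial_eq_zero {n k : ℕ} {s m : ℤ} (hk : k < n) (hm : m = s - 2 * k) :
    momentFun w m (sPolynomial w n s) = 0 := by
  rw [momentFun_sPolynomial]
  refine div_eq_zero_iff.2 (Or.inl (Matrix.det_zero_of_column_eq
    (i := ⟨k, by omega⟩) (j := Fin.last n) ?_ ?_))
  · intro h
    have := congrArg Fin.val h
    simp only [Fin.val_last] at this
    omega
  · intro j
    simp only [hk, if_true, Fin.val_last, lt_irrefl, if_false, hm]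
    congr 1
    ring

/-- The norm: the last column is the next column of moments. -/
lemma momentFun_sPolynomial_self {n : ℕ} {s m : ℤ} (hm : m = s - 2 * n) :
    momentFun w m (sPolynomial w n s) = gnorm w n s := by
  rw [momentFun_sPolynomial, gnorm]
  congr 1
  rw [Edet]
  congr 1
  ext j k
  split_ifs with h
  · rfl
  · have : (k : ℕ) = n := by omega
    rw [this, hm]
    congr 1
    ring

/-! ### Reciprocal polynomials -/

lemma recip_sPolynomial (n : ℕ) (s : ℤ) (z : ℂ) :
    recip n z (sPolynomial w n s) = Sstar w n s z :=
  sum_range_sPolynomial n s (fun j => z ^ (n - j))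

lemma recip_add (n : ℕ) (z : ℂ) (p q : ℂ[X]) : recip n z (p + q) = recip n z p + recip n z q := by
  simp [recip, add_mul, Finset.sum_add_distrib]

lemma recip_C_mul (n : ℕ) (z c : ℂ) (p : ℂ[X]) : recip n z (C c * p) = c * recip n z p := by
  simp [recip, mul_assoc, Finset.mul_sum]

lemma recip_X_mul (n : ℕ) (z : ℂ) (p : ℂ[X]) : recip (n + 1) z (X * p) = recip n z p := by
  rw [recip, Finset.sum_range_succ']
  simp [recip]

lemma recip_succ {n : ℕ} (z : ℂ) {p : ℂ[X]} (h : p.coeff (n + 1) = 0) :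
    recip (n + 1) z p = z * recip n z p := by
  rw [recip, Finset.sum_range_succ, h, zero_mul, add_zero, recip, Finset.mul_sum]
  refine Finset.sum_congr rfl fun j hj => ?_
  rw [Finset.mem_range] at hj
  rw [show n + 1 - j = (n - j) + 1 by omega, pow_succ]
  ring

/-! ### Uniqueness -/

/-- Up to a scalar, `S_n(·;s)` is the only polynomial of degree `≤ n` killed by the first `n`
functionals. -/
lemma eq_C_mul_sPolynomial {n : ℕ} {s : ℤ} (hE : Edet w n s ≠ 0) {q : ℂ[X]}
    (hd : ∀ j, n < j → q.coeff j = 0)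
    (h : ∀ k : ℕ, k < n → momentFun w (s - 2 * k) q = 0) :
    q = C (q.coeff n) * sPolynomial w n s := by
  rw [← sub_eq_zero]
  refine eq_zero_of_momentFun hE (fun j hj => ?_) fun k hk => ?_
  · rw [coeff_sub, coeff_C_mul]
    rcases hj.eq_or_lt with rfl | hj
    · rw [coeff_sPolynomial_self hE, mul_one, sub_self]
    · rw [hd j hj, coeff_sPolynomial_of_lt s hj, mul_zero, sub_self]
  · rw [momentFun_sub, momentFun_C_mul, h k hk, momentFun_sPolynomial_eq_zero hk rfl]
    ring

/-! ### Contiguity relations -/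

/-- `S_{n+1}(·;s)` and `X * S_n(·;t)` are both monic of degree `n + 1`, so their difference has
degree at most `n`. -/
lemma coeff_sub_X_mul (hE : ∀ (m : ℕ) (σ : ℤ), Edet w m σ ≠ 0)
    (n : ℕ) (s t : ℤ) (j : ℕ) (hj : n < j) :
    (sPolynomial w (n + 1) s - X * sPolynomial w n t).coeff j = 0 := by
  obtain ⟨i, rfl⟩ : ∃ i, j = i + 1 := ⟨j - 1, by omega⟩
  rw [coeff_sub, coeff_X_mul]
  rcases (show n ≤ i by omega).eq_or_lt with rfl | hi
  · rw [coeff_sPolynomial_self (hE _ _), coeff_sPolynomial_self (hE _ _), sub_self]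
  · rw [coeff_sPolynomial_of_lt _ hi, coeff_sPolynomial_of_lt _ (by omega), sub_self]

lemma sPolynomial_succ_γ (hE : ∀ (m : ℕ) (σ : ℤ), Edet w m σ ≠ 0)
    (n : ℕ) (s : ℤ) :
    sPolynomial w (n + 1) s =
      X * sPolynomial w n (s + 1) + C (γc w n s) * sPolynomial w n s := by
  have h := eq_C_mul_sPolynomial (hE n s) (coeff_sub_X_mul hE n s (s + 1)) fun k hk => by
    rw [momentFun_sub, momentFun_X_mul, momentFun_sPolynomial_eq_zero (k := k) (by omega) rfl,
      momentFun_sPolynomial_eq_zero hk (by ring), sub_zero]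
  set c := (sPolynomial w (n + 1) s - X * sPolynomial w n (s + 1)).coeff n
  -- The scalar is read off by applying the next functional.
  have hc := congrArg (momentFun w (s - 2 * n)) h
  rw [momentFun_sub, momentFun_X_mul, momentFun_C_mul,
    momentFun_sPolynomial_eq_zero (k := n) (by omega) rfl,
    momentFun_sPolynomial_self (s := s) rfl, momentFun_sPolynomial_self (s := s + 1) (by ring)] at hc
  have hg : gnorm w n s ≠ 0 := div_ne_zero (hE _ _) (hE _ _)
  have : γc w n s = c := by
    rw [γc, div_eq_iff hg, ← hc]
    ring
  rw [this, ← h]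
  ring

lemma sPolynomial_succ_θ (hE : ∀ (m : ℕ) (σ : ℤ), Edet w m σ ≠ 0)
    (n : ℕ) (s : ℤ) :
    sPolynomial w (n + 1) s =
      X * sPolynomial w n (s - 1) - C (θc w n s) * sPolynomial w n (s - 2) := by
  have h := eq_C_mul_sPolynomial (hE n (s - 2)) (coeff_sub_X_mul hE n s (s - 1)) fun k hk => by
    rw [momentFun_sub, momentFun_X_mul,
      momentFun_sPolynomial_eq_zero (k := k + 1) (by omega) (by push_cast; ring),
      momentFun_sPolynomial_eq_zero hk (by ring), sub_zero]
  set c := (sPolynomial w (n + 1) s - X * sPolynomial w n (s - 1)).coeff n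
  -- The scalar is read off from the constant coefficients.
  have hc := congrArg (fun p => coeff p 0) h
  simp only [coeff_sub, mul_coeff_zero, coeff_X_zero, zero_mul, sub_zero, coeff_C_zero,
    coeff_sPolynomial_zero] at hc
  rw [show s - 2 + 1 = s - 1 by ring] at hc
  have h1 := hE (n + 1) s
  have h2 := hE n (s - 2)
  have h3 := hE n (s - 1)
  have hs : ((-1 : ℂ) ^ n) ≠ 0 := by simp
  have : θc w n s = -c := by
    rw [θc]
    field_simp at hc ⊢
    rw [pow_succ] at hc
    refine mul_left_cancel₀ hs ?_
    linear_combination -hc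
  rw [this, C_neg, neg_mul, sub_neg_eq_add, ← h]
  ring

lemma sPolynomial_shift_two (hE : ∀ (m : ℕ) (σ : ℤ), Edet w m σ ≠ 0)
    (n : ℕ) (s : ℤ) :
    sPolynomial w (n + 1) (s + 2) = sPolynomial w (n + 1) s -
      C (θc w (n + 1) (s + 1) + γc w (n + 1) (s + 1)) * sPolynomial w n s := by
  have h := eq_C_mul_sPolynomial (q := sPolynomial w (n + 1) (s + 2) - sPolynomial w (n + 1) s)
    (hE n s) (fun j hj => by
      rw [coeff_sub]
      rcases (show n + 1 ≤ j by omega).eq_or_lt with rfl | hj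
      · rw [coeff_sPolynomial_self (hE _ _), coeff_sPolynomial_self (hE _ _), sub_self]
      · rw [coeff_sPolynomial_of_lt _ hj, coeff_sPolynomial_of_lt _ hj, sub_self])
    fun k hk => by
      rw [momentFun_sub, momentFun_sPolynomial_eq_zero (k := k + 1) (by omega) (by push_cast; ring),
        momentFun_sPolynomial_eq_zero (k := k) (by omega) rfl, sub_zero]
  -- Two expressions for `S_{n+2}(s+1)`; their coefficients of `X ^ (n + 1)` give the scalar.
  have hγ := sPolynomial_succ_γ hE (n + 1) (s + 1)
  rw [sPolynomial_succ_θ hE (n + 1) (s + 1), add_sub_cancel_right,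
    show s + 1 + 1 = s + 2 by ring, show s + 1 - 2 = s - 1 by ring] at hγ
  have hc := congrArg (fun p => coeff p (n + 1)) hγ
  simp only [coeff_sub, coeff_add, coeff_X_mul, coeff_C_mul,
    coeff_sPolynomial_self (hE _ _)] at hc
  have : θc w (n + 1) (s + 1) + γc w (n + 1) (s + 1) =
      -(sPolynomial w (n + 1) (s + 2) - sPolynomial w (n + 1) s).coeff n := by
    rw [coeff_sub]
    linear_combination -hc
  rw [this, C_neg, neg_mul, sub_neg_eq_add, ← h]
  ring

lemma Sstar_succ_γ (hE : ∀ (m : ℕ) (σ : ℤ), Edet w m σ ≠ 0)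
    (n : ℕ) (s : ℤ) (z : ℂ) :
    Sstar w (n + 1) s z = Sstar w n (s + 1) z + γc w n s * z * Sstar w n s z := by
  rw [← recip_sPolynomial, sPolynomial_succ_γ hE, recip_add, recip_X_mul, recip_C_mul,
    recip_succ z (coeff_sPolynomial_of_lt s (Nat.lt_succ_self n)), recip_sPolynomial,
    recip_sPolynomial]
  ring

lemma Sstar_shift_two (hE : ∀ (m : ℕ) (σ : ℤ), Edet w m σ ≠ 0)
    (n : ℕ) (s : ℤ) (z : ℂ) :
    Sstar w (n + 1) (s + 2) z = Sstar w (n + 1) s z -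
      (θc w (n + 1) (s + 1) + γc w (n + 1) (s + 1)) * z * Sstar w n s z := by
  rw [← recip_sPolynomial, sPolynomial_shift_two hE, sub_eq_add_neg, ← neg_mul, ← C_neg, recip_add,
    recip_C_mul, recip_succ z (coeff_sPolynomial_of_lt s (Nat.lt_succ_self n)), recip_sPolynomial,
    recip_sPolynomial]
  ring

end BiOrth

/-- Third-order pure-degree recurrence for the reciprocal `j-2k` polynomials `S*_n(z;s)`. -/
theorem stmt10 (w : ℤ → ℂ) (hE : ∀ (m : ℕ) (σ : ℤ), Edet w m σ ≠ 0)
    (n : ℕ) (s : ℤ) (z : ℂ) :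
    Sstar w (n + 3) s z - (γc w (n + 2) s + γc w (n + 1) (s + 1)) * z * Sstar w (n + 2) s z -
        (1 - γc w (n + 1) (s + 1) * γc w (n + 1) s * z ^ 2) * Sstar w (n + 1) s z +
        (θc w (n + 1) (s + 1) + γc w (n + 1) (s + 1)) * z * Sstar w n s z = 0 := by
  have h1 := BiOrth.Sstar_succ_γ hE (n + 2) s z
  have h2 := BiOrth.Sstar_succ_γ hE (n + 1) s z
  have h3 := BiOrth.Sstar_succ_γ hE (n + 1) (s + 1) z
  rw [show s + 1 + 1 = s + 2 by ring] at h3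
  have h4 := BiOrth.Sstar_shift_two hE n s z
  linear_combination h1 + h3 + h4 - γc w (n + 1) (s + 1) * z * h2
end

section
/- Under the genericity assumptions, for every integer n ≥ 0, all r, s ∈ ℤ, and every z ∈ ℂ with z ≠ 0: Q_n(z²;r) = (D_n^{(r+2)}/D_n^{(r)})·(z^{2n+1}/2)·[ P_{n+1}(z^{−1};r+2)·P_n(−z^{−1};r+2) − P_{n+1}(−z^{−1};r+2)·P_n(z^{−1};r+2) ], and R_n(z²;s) = (E_n^{(s−2)}/E_n^{(s)})·(z^{2n+1}/2)·[ S_{n+1}(z^{−1};s−2)·S_n(−z^{−1};s−2) − S_{n+1}(−z^{−1};s−2)·S_n(z^{−1};s−2) ]. -/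
/-! ### Bordered determinants and the Schur complement -/

/-- The entry in column `k` of a row `u` once its first `n` entries have been cleared by the rows
`f 0, …, f (n-1)`; it is an entry of the Schur complement of the block `(f i j)_{i,j<n}`, and
meaningful only if that block is invertible. -/
noncomputable def schurEntry (f : ℕ → ℕ → ℂ) (n : ℕ) (u : ℕ → ℂ) (k : ℕ) : ℂ :=
  u k - ∑ j : Fin n, (∑ i : Fin n, u i * (Matrix.of fun a b : Fin n => f a b)⁻¹ i j) * f j k

theorem det_border_one (f : ℕ → ℕ → ℂ) (n : ℕ) (u : ℕ → ℂ)
    (hA : (Matrix.of fun a b : Fin n => f a b).det ≠ 0) :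
    Matrix.det (fun j k : Fin (n + 1) => if (j : ℕ) < n then f j k else u k) =
      (Matrix.of fun a b : Fin n => f a b).det * schurEntry f n u n := by
  set A : Matrix (Fin n) (Fin n) ℂ := Matrix.of fun a b : Fin n => f a b with hAdef
  have : Invertible A := A.invertibleOfIsUnitDet hA.isUnit
  refine (Matrix.det_submatrix_equiv_self (finSumFinEquiv (m := n) (n := 1)) _).symm.trans ?_
  have h : Matrix.submatrix
      (fun j k : Fin (n + 1) => if (j : ℕ) < n then f j k else u k)
      (finSumFinEquiv (m := n) (n := 1)) (finSumFinEquiv (m := n) (n := 1)) =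
      Matrix.fromBlocks A (Matrix.of fun (a : Fin n) (b : Fin 1) => f a (n + b))
        (Matrix.of fun (_ : Fin 1) (b : Fin n) => u b)
        (Matrix.of fun (_ : Fin 1) (b : Fin 1) => u (n + b)) := by
    ext i j
    rcases i with i | i <;> rcases j with j | j <;> simp [A, Matrix.submatrix]
  rw [h, Matrix.det_fromBlocks₁₁, Matrix.det_fin_one]
  simp [schurEntry, Matrix.mul_apply, hAdef, Matrix.invOf_eq_nonsing_inv]

theorem det_border_two (f : ℕ → ℕ → ℂ) (n : ℕ) (u v : ℕ → ℂ)
    (hA : (Matrix.of fun a b : Fin n => f a b).det ≠ 0) :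
    Matrix.det (fun j k : Fin (n + 1 + 1) =>
        if (j : ℕ) < n then f j k else if (j : ℕ) < n + 1 then u k else v k) =
      (Matrix.of fun a b : Fin n => f a b).det *
        (schurEntry f n u n * schurEntry f n v (n + 1) -
          schurEntry f n u (n + 1) * schurEntry f n v n) := by
  set A : Matrix (Fin n) (Fin n) ℂ := Matrix.of fun a b : Fin n => f a b with hAdef
  have : Invertible A := A.invertibleOfIsUnitDet hA.isUnit
  refine (Matrix.det_submatrix_equiv_self (finSumFinEquiv (m := n) (n := 2)) _).symm.trans ?_
  have h : Matrix.submatrix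
      (fun j k : Fin (n + 1 + 1) =>
        if (j : ℕ) < n then f j k else if (j : ℕ) < n + 1 then u k else v k)
      (finSumFinEquiv (m := n) (n := 2)) (finSumFinEquiv (m := n) (n := 2)) =
      Matrix.fromBlocks A (Matrix.of fun (a : Fin n) (b : Fin 2) => f a (n + b))
        (Matrix.of fun (a : Fin 2) (b : Fin n) => if (a : ℕ) = 0 then u b else v b)
        (Matrix.of fun (a : Fin 2) (b : Fin 2) =>
          if (a : ℕ) = 0 then u (n + b) else v (n + b)) := by
    ext i j
    rcases i with i | i <;> rcases j with j | j <;> simp [A, Matrix.submatrix]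
  rw [h, Matrix.det_fromBlocks₁₁, Matrix.det_fin_two]
  simp [schurEntry, Matrix.mul_apply, hAdef, Matrix.invOf_eq_nonsing_inv]

/-! ### Geometric rows -/

/-- Subtracting `x` times each column from the next one annihilates a geometric last row, up to its
first entry; expansion along that row lowers the size by one. -/
theorem det_geom_row (f : ℕ → ℕ → ℂ) (n : ℕ) (c x : ℂ) :
    Matrix.det (fun j k : Fin (n + 1) => if (j : ℕ) < n then f j k else c * x ^ (k : ℕ)) =
      (-1) ^ n * c * Matrix.det (fun j k : Fin n => f j (k + 1) - x * f j k) := by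
  let A : Matrix (Fin (n + 1)) (Fin (n + 1)) ℂ :=
    fun j k => if (j : ℕ) < n then f j k else c * x ^ (k : ℕ)
  let B : Matrix (Fin (n + 1)) (Fin (n + 1)) ℂ :=
    fun j => Fin.cons (A j 0) (fun k : Fin n => A j k.succ - x * A j k.castSucc)
  have hAB : A.det = B.det := by
    refine Matrix.det_eq_of_forall_col_eq_smul_add_pred (fun _ => x) ?_ ?_
    · intro i; simp [B]
    · intro i j; simp [B]
  change A.det = _
  rw [hAB, Matrix.det_succ_row B (Fin.last n), Fin.sum_univ_succ, Finset.sum_eq_zero]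
  · have hsub : B.submatrix (Fin.last n).succAbove (Fin.succAbove 0) =
        fun j k : Fin n => f j (k + 1) - x * f j k := by
      ext j k
      simp [B, A, Matrix.submatrix]
    rw [hsub]
    simp [B, A]
  · intro k _
    have : B (Fin.last n) k.succ = 0 := by
      simp [B, A, pow_succ]
      ring
    rw [this]
    ring

/-- Two steps of `det_geom_row`, with the ratios `x` and `-x`. The first step multiplies the
remaining geometric row `((-x)^k)_k` by `-2x`, so that it stays geometric for the second. -/
theorem det_two_geom_rows (f : ℕ → ℕ → ℂ) (n : ℕ) (x : ℂ) :
    Matrix.det (fun j k : Fin (n + 1 + 1) =>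
        if (j : ℕ) < n then f j k
        else if (j : ℕ) < n + 1 then (-x) ^ (k : ℕ) else x ^ (k : ℕ)) =
      2 * x * Matrix.det (fun j k : Fin n => f j (k + 2) - x ^ 2 * f j k) := by
  have h1 := det_geom_row (fun j k => if j < n then f j k else (-x) ^ k) (n + 1) 1 x
  have h2 := det_geom_row (fun j k => f j (k + 1) - x * f j k) n (-x - x) (-x)
  have e1 : (fun j k : Fin (n + 1 + 1) =>
        if (j : ℕ) < n then f j k
        else if (j : ℕ) < n + 1 then (-x) ^ (k : ℕ) else x ^ (k : ℕ)) =
      fun j k : Fin (n + 1 + 1) => if (j : ℕ) < n + 1 then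
        (if (j : ℕ) < n then f j k else (-x) ^ (k : ℕ)) else 1 * x ^ (k : ℕ) := by
    ext j k
    split_ifs <;> first | rfl | omega | simp
  have e2 : (fun j k : Fin (n + 1) =>
        (if (j : ℕ) < n then f j (k + 1) else (-x) ^ ((k : ℕ) + 1)) -
          x * (if (j : ℕ) < n then f j k else (-x) ^ (k : ℕ))) =
      fun j k : Fin (n + 1) => if (j : ℕ) < n then f j (k + 1) - x * f j k
        else (-x - x) * (-x) ^ (k : ℕ) := by
    ext j k
    split_ifs <;> ring
  have e3 : (fun j k : Fin n => f j (k + 1 + 1) - x * f j (k + 1) -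
        -x * (f j (k + 1) - x * f j k)) =
      fun j k : Fin n => f j (k + 2) - x ^ 2 * f j k := by
    ext j k
    ring
  rw [e1, h1, e2, h2, e3]
  have hs : (-1 : ℂ) ^ n * (-1) ^ n = 1 := by rw [← mul_pow]; simp
  linear_combination
    (2 * x * Matrix.det (fun j k : Fin n => f j (k + 2) - x ^ 2 * f j k)) * hs

/-! ### The identity for `Q_n` -/

/-- The cross terms in `P_{n+1}` cancel in the antisymmetric combination, which leaves one
determinant bordered by two geometric rows. -/
theorem Ppoly_commutator (w : ℤ → ℂ) (hD : ∀ (m : ℕ) (ρ : ℤ), Ddet w m ρ ≠ 0)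
    (n : ℕ) (r : ℤ) (x y : ℂ) :
    Ddet w n r * (Ppoly w (n + 1) r x * Ppoly w n r y - Ppoly w (n + 1) r y * Ppoly w n r x) =
      Matrix.det (fun j k : Fin (n + 1 + 1) =>
        if (j : ℕ) < n then w (r + 2 * ((j : ℕ) : ℤ) - ((k : ℕ) : ℤ))
        else if (j : ℕ) < n + 1 then y ^ (k : ℕ) else x ^ (k : ℕ)) := by
  let f : ℕ → ℕ → ℂ := fun j k => w (r + 2 * (j : ℤ) - (k : ℤ))
  have hA : (Matrix.of fun a b : Fin n => f a b).det ≠ 0 := hD n r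
  have hdet : (Matrix.of fun a b : Fin n => f a b).det = Ddet w n r := rfl
  have hP (t : ℂ) : Ppoly w n r t = schurEntry f n (fun k => t ^ k) n := by
    have h := det_border_one f n (fun k => t ^ k) hA
    rw [hdet] at h
    rw [Ppoly, div_eq_iff (hD n r), mul_comm]
    exact h
  have hD1 : Ddet w (n + 1) r = Ddet w n r * schurEntry f n (f n) n := by
    rw [← hdet, ← det_border_one f n (f n) hA, Ddet]
    congr 1
    ext j k
    split_ifs with hj
    · rfl
    · simp [f, show (j : ℕ) = n by omega]
  have hP1 (t : ℂ) : Ppoly w (n + 1) r t * Ddet w (n + 1) r = Ddet w n r *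
      (schurEntry f n (f n) n * schurEntry f n (fun k => t ^ k) (n + 1) -
        schurEntry f n (f n) (n + 1) * schurEntry f n (fun k => t ^ k) n) := by
    rw [Ppoly, div_mul_cancel₀ _ (hD (n + 1) r), ← hdet, ← det_border_two f n _ _ hA]
    congr 1
    ext j k
    by_cases hj : (j : ℕ) < n
    · simp [f, hj, show (j : ℕ) < n + 1 by omega]
    · by_cases hj' : (j : ℕ) < n + 1
      · simp [f, show (j : ℕ) = n by omega]
      · simp [hj, hj']
  have hB := det_border_two f n (fun k => y ^ k) (fun k => x ^ k) hA
  rw [hdet] at hB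
  refine Eq.trans ?_ hB.symm
  apply mul_right_cancel₀ (hD (n + 1) r)
  rw [hP x, hP y]
  have e1 := hP1 x
  have e2 := hP1 y
  linear_combination
    (Ddet w n r * schurEntry f n (fun k => y ^ k) n) * e1 -
      (Ddet w n r * schurEntry f n (fun k => x ^ k) n) * e2 -
      Ddet w n r * (schurEntry f n (fun k => y ^ k) n * schurEntry f n (fun k => x ^ k) (n + 1) -
        schurEntry f n (fun k => y ^ k) (n + 1) * schurEntry f n (fun k => x ^ k) n) * hD1

theorem Qpoly_sq (w : ℤ → ℂ) (hD : ∀ (m : ℕ) (ρ : ℤ), Ddet w m ρ ≠ 0)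
    (n : ℕ) (r : ℤ) (z : ℂ) (hz : z ≠ 0) :
    Qpoly w n r (z ^ 2) =
      Ddet w n (r + 2) / Ddet w n r * (z ^ (2 * n + 1) / 2) *
        (Ppoly w (n + 1) (r + 2) z⁻¹ * Ppoly w n (r + 2) (-z⁻¹) -
          Ppoly w (n + 1) (r + 2) (-z⁻¹) * Ppoly w n (r + 2) z⁻¹) := by
  have hcomm := (Ppoly_commutator w hD n (r + 2) z⁻¹ (-z⁻¹)).trans
    (det_two_geom_rows (fun j k => w (r + 2 + 2 * (j : ℤ) - (k : ℤ))) n z⁻¹)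
  have hQ : Matrix.det (fun j k : Fin (n + 1) =>
        if (k : ℕ) < n then w (r + 2 * ((j : ℕ) : ℤ) - ((k : ℕ) : ℤ)) else (z ^ 2) ^ (j : ℕ)) =
      z ^ (2 * n) * Matrix.det (fun j k : Fin n =>
        w (r + 2 + 2 * ((j : ℕ) : ℤ) - (((k : ℕ) + 2 : ℕ) : ℤ)) -
          z⁻¹ ^ 2 * w (r + 2 + 2 * ((j : ℕ) : ℤ) - ((k : ℕ) : ℤ))) := by
    have h := det_geom_row (fun j k => w (r + 2 * (k : ℤ) - (j : ℤ))) n 1 (z ^ 2)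
    simp only [one_mul, mul_one] at h
    refine (Matrix.det_transpose _).symm.trans (h.trans ?_)
    refine (congrArg _ (Matrix.det_transpose _).symm).trans ?_
    -- Both sides reduce to the same matrix because `z ^ 2 * z⁻¹ ^ 2 = 1`.
    have e : Matrix.transpose (fun j k : Fin n =>
          w (r + 2 * (((k : ℕ) + 1 : ℕ) : ℤ) - ((j : ℕ) : ℤ)) -
            z ^ 2 * w (r + 2 * ((k : ℕ) : ℤ) - ((j : ℕ) : ℤ))) =
        (-z ^ 2) • (Matrix.of fun j k : Fin n =>
          w (r + 2 + 2 * ((j : ℕ) : ℤ) - (((k : ℕ) + 2 : ℕ) : ℤ)) -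
            z⁻¹ ^ 2 * w (r + 2 + 2 * ((j : ℕ) : ℤ) - ((k : ℕ) : ℤ))) := by
      ext j k
      have a1 : r + 2 * (((j : ℕ) + 1 : ℕ) : ℤ) - ((k : ℕ) : ℤ) =
          r + 2 + 2 * ((j : ℕ) : ℤ) - ((k : ℕ) : ℤ) := by push_cast; ring
      have a2 : r + 2 + 2 * ((j : ℕ) : ℤ) - (((k : ℕ) + 2 : ℕ) : ℤ) =
          r + 2 * ((j : ℕ) : ℤ) - ((k : ℕ) : ℤ) := by push_cast; ring
      simp only [Matrix.smul_apply, Matrix.of_apply, smul_eq_mul, a2]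
      change w (r + 2 * (((j : ℕ) + 1 : ℕ) : ℤ) - ((k : ℕ) : ℤ)) -
        z ^ 2 * w (r + 2 * ((j : ℕ) : ℤ) - ((k : ℕ) : ℤ)) = _
      rw [a1]
      field_simp
      ring
    rw [e, Matrix.det_smul, Fintype.card_fin, ← mul_assoc, ← mul_pow,
      show (-1 : ℂ) * -z ^ 2 = z ^ 2 by ring, ← pow_mul]
    rfl
  rw [Qpoly, hQ, div_eq_iff (hD n r)]
  have h0 := hD n r
  have hrw (K : ℂ) : Ddet w n (r + 2) / Ddet w n r * (z ^ (2 * n + 1) / 2) * K * Ddet w n r =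
      z ^ (2 * n + 1) / 2 * (Ddet w n (r + 2) * K) := by
    field_simp
  rw [hrw, hcomm, pow_succ z (2 * n)]
  linear_combination -(z ^ (2 * n) * Matrix.det (fun j k : Fin n =>
        w (r + 2 + 2 * ((j : ℕ) : ℤ) - (((k : ℕ) + 2 : ℕ) : ℤ)) -
          z⁻¹ ^ 2 * w (r + 2 + 2 * ((j : ℕ) : ℤ) - ((k : ℕ) : ℤ)))) * mul_inv_cancel₀ hz

/-! ### Reflection of the moments -/

theorem Edet_eq_reflect (w : ℤ → ℂ) (n : ℕ) (s : ℤ) :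
    Edet w n s = Ddet (fun m => w (-m)) n (-s) := by
  rw [Edet, Ddet]
  refine (Matrix.det_transpose _).symm.trans ?_
  congr 1
  ext j k
  change w (s + ((k : ℕ) : ℤ) - 2 * ((j : ℕ) : ℤ)) =
    w (-(-s + 2 * ((j : ℕ) : ℤ) - ((k : ℕ) : ℤ)))
  congr 1
  ring

theorem Rpoly_eq_reflect (w : ℤ → ℂ) (n : ℕ) (s : ℤ) (z : ℂ) :
    Rpoly w n s z = Qpoly (fun m => w (-m)) n (-s) z := by
  rw [Rpoly, Qpoly, Edet_eq_reflect]
  congr 1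
  refine (Matrix.det_transpose _).symm.trans ?_
  congr 1
  ext j k
  change (if (k : ℕ) < n then w (s + ((k : ℕ) : ℤ) - 2 * ((j : ℕ) : ℤ)) else z ^ (j : ℕ)) =
    if (k : ℕ) < n then w (-(-s + 2 * ((j : ℕ) : ℤ) - ((k : ℕ) : ℤ))) else z ^ (j : ℕ)
  congr 2
  ring

theorem Spoly_eq_reflect (w : ℤ → ℂ) (n : ℕ) (s : ℤ) (z : ℂ) :
    Spoly w n s z = Ppoly (fun m => w (-m)) n (-s) z := by
  rw [Spoly, Ppoly, Edet_eq_reflect]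
  congr 1
  refine (Matrix.det_transpose _).symm.trans ?_
  congr 1
  ext j k
  change (if (j : ℕ) < n then w (s + ((k : ℕ) : ℤ) - 2 * ((j : ℕ) : ℤ)) else z ^ (k : ℕ)) =
    if (j : ℕ) < n then w (-(-s + 2 * ((j : ℕ) : ℤ) - ((k : ℕ) : ℤ))) else z ^ (k : ℕ)
  congr 2
  ring

/-- `Q_n(z²;r)` and `R_n(z²;s)` as bilinear combinations of `P`- resp. `S`-polynomials. -/
theorem stmt17 (w : ℤ → ℂ)
    (hD : ∀ (m : ℕ) (ρ : ℤ), Ddet w m ρ ≠ 0)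
    (hE : ∀ (m : ℕ) (σ : ℤ), Edet w m σ ≠ 0)
    (n : ℕ) (r s : ℤ) (z : ℂ) (hz : z ≠ 0) :
    Qpoly w n r (z ^ 2) =
      Ddet w n (r + 2) / Ddet w n r * (z ^ (2 * n + 1) / 2) *
        (Ppoly w (n + 1) (r + 2) z⁻¹ * Ppoly w n (r + 2) (-z⁻¹) -
          Ppoly w (n + 1) (r + 2) (-z⁻¹) * Ppoly w n (r + 2) z⁻¹) ∧
    Rpoly w n s (z ^ 2) =
      Edet w n (s - 2) / Edet w n s * (z ^ (2 * n + 1) / 2) *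
        (Spoly w (n + 1) (s - 2) z⁻¹ * Spoly w n (s - 2) (-z⁻¹) -
          Spoly w (n + 1) (s - 2) (-z⁻¹) * Spoly w n (s - 2) z⁻¹) := by
  refine ⟨Qpoly_sq w hD n r z hz, ?_⟩
  have hD' : ∀ (m : ℕ) (ρ : ℤ), Ddet (fun m => w (-m)) m ρ ≠ 0 := by
    intro m ρ
    have h := hE m (-ρ)
    rwa [Edet_eq_reflect, neg_neg] at h
  simp only [Rpoly_eq_reflect, Spoly_eq_reflect, Edet_eq_reflect,
    show -(s - 2) = -s + 2 by ring]
  exact Qpoly_sq _ hD' n (-s) z hz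
end
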